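/- arXiv:2104.11836 — 4 statements merged into one kernel-verified Lean document; each statement's English description precedes it below -/
import Mathlib

section
/- Let K be an infinite field, let S = K[X_{1,i_1}·X_{2,i_2}⋯X_{s,i_s} | 1 ≤ i_1 ≤ n_1, …, 1 ≤ i_s ≤ n_s] be the Segre ring (the K-subalgebra of K[X_{j,i}] generated by the products of one variable from each of the s groups), and let R be a standard graded algebra that is a homomorphic image of S via a graded surjection. Let n = dim_K R_1, d > 0, and r ≥ d + n − 1. Then for general linear forms l_{t,1},…,l_{t,s} (t = 1,…,r), where l_{t,j} is a linear form of K[X_{j,1},…,X_{j,n_j}], the r linear forms of R given by the images of the products l_{t,1}·l_{t,2}⋯l_{t,s} satisfy property (Gr,d). -/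
/-- Polynomial functions on a `K`-vector space `V`: the subalgebra of `V → K`
generated by the linear functionals. -/
def polyFuns (K V : Type*) [Field K] [AddCommGroup V] [Module K V] : Subalgebra K (V → K) :=
  Algebra.adjoin K {f : V → K | ∃ φ : V →ₗ[K] K, ⇑φ = f}

/-- A subset of (the affine space of) a `K`-vector space is Zariski closed if it is the
common zero locus of a family of polynomial functions. -/
def IsZClosed (K : Type*) {V : Type*} [Field K] [AddCommGroup V] [Module K V]
    (Z : Set V) : Prop :=
  ∃ S : Set (V → K), (∀ f ∈ S, f ∈ polyFuns K V) ∧ Z = {v | ∀ f ∈ S, f v = 0}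

/-- A subset is Zariski open if its complement is Zariski closed. -/
def IsZOpen (K : Type*) {V : Type*} [Field K] [AddCommGroup V] [Module K V]
    (U : Set V) : Prop :=
  IsZClosed K Uᶜ

/-- An irreducible variety: a nonempty Zariski closed set which is not the union of two
proper closed subsets. -/
def IsIrredVariety (K : Type*) {V : Type*} [Field K] [AddCommGroup V] [Module K V]
    (W : Set V) : Prop :=
  IsZClosed K W ∧ W.Nonempty ∧
    ∀ Z₁ Z₂ : Set V, IsZClosed K Z₁ → IsZClosed K Z₂ → W ⊆ Z₁ ∪ Z₂ → (W ⊆ Z₁ ∨ W ⊆ Z₂)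

/-- Auxiliary recursion for `wordIdeal`: letters are booleans, `true` standing for the
letter `c` (colon) and `false` for the letter `s` (sum). The natural number argument keeps
track of which linear form is to be used next (0-indexed). -/
def wordIdealAux {R : Type*} [CommRing R] (l : ℕ → R) : ℕ → Ideal R → List Bool → Ideal R
  | _, I, [] => I
  | j, I, a :: o =>
      wordIdealAux l (j + 1)
        (if a then I.colon (Ideal.span {l j}) else I ⊔ Ideal.span {l j}) o

/-- The ideal `I_{l,o}` attached to a sequence of (linear) forms `l` and a word `o` in the
letters `{c, s}` (here `c = true`, `s = false`): starting from `(0)`, the `j`-th letter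
either colons (`c`) or adds (`s`) the `j`-th form. -/
def wordIdeal {R : Type*} [CommRing R] (l : ℕ → R) (o : List Bool) : Ideal R :=
  wordIdealAux l 0 ⊥ o

/-- The degree `d` component `I ∩ R_d` of an ideal `I`, as a `K`-subspace of `𝒜 d`. -/
def homComp {K R : Type*} [Field K] [CommRing R] [Algebra K R]
    (𝒜 : ℕ → Submodule K R) (I : Ideal R) (d : ℕ) : Submodule K (𝒜 d) :=
  Submodule.comap (𝒜 d).subtype (Submodule.restrictScalars K I)

/-- `dim_K (I)_d`, the dimension of the degree `d` component of the (homogeneous) ideal `I`. -/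
noncomputable def homDim {K R : Type*} [Field K] [CommRing R] [Algebra K R]
    (𝒜 : ℕ → Submodule K R) (I : Ideal R) (d : ℕ) : ℕ :=
  Module.finrank K (homComp 𝒜 I d)

/-- `dim_K (R/I)_d`, the dimension of the degree `d` component of `R/I` for a
(homogeneous) ideal `I`, computed as `dim 𝒜 d / (I ∩ 𝒜 d)`. -/
noncomputable def quotDim {K R : Type*} [Field K] [CommRing R] [Algebra K R]
    (𝒜 : ℕ → Submodule K R) (I : Ideal R) (d : ℕ) : ℕ :=
  Module.finrank K ((𝒜 d) ⧸ homComp 𝒜 I d)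

/-- `macaulayDown c d = c_⟨d⟩`: if `c = C(k_d,d) + … + C(k_1,1)` is the `d`-th Macaulay
representation of `c`, then `c_⟨d⟩ = C(k_d - 1,d) + … + C(k_1 - 1,1)`; computed greedily. -/
def macaulayDown : ℕ → ℕ → ℕ
  | _, 0 => 0
  | c, d + 1 =>
      let k := Nat.findGreatest (fun k => Nat.choose k (d + 1) ≤ c) (c + d + 1)
      Nat.choose (k - 1) (d + 1) + macaulayDown (c - Nat.choose k (d + 1)) d

/-- Property (Gr,d) for the linear forms `l 0, …, l (r-1)` (letters: `true = c`,
`false = s`): for every word `o` of length `i ≤ r`,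
(1) if `m ⊄ I_o` and `i < r` then `l_{i+1} ∉ I_o`;
(2) if `i = r` and `|o|_c < d` then `m ⊆ I_o`;
(3) if `i ≤ r - 2` then `dim (I_{o,c,s})_{d - |o|_c - 1} ≤ dim (I_{o,s,c})_{d - |o|_c - 1}`. -/
def GrProp {K R : Type*} [Field K] [CommRing R] [Algebra K R]
    (𝒜 : ℕ → Submodule K R) [GradedAlgebra 𝒜] (l : ℕ → R) (r d : ℕ) : Prop :=
  ∀ o : List Bool, o.length ≤ r →
    (¬ (HomogeneousIdeal.irrelevant 𝒜).toIdeal ≤ wordIdeal l o → o.length < r →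
        l o.length ∉ wordIdeal l o) ∧
    (o.length = r → o.count true < d →
        (HomogeneousIdeal.irrelevant 𝒜).toIdeal ≤ wordIdeal l o) ∧
    (o.length + 2 ≤ r →
        homDim 𝒜 (wordIdeal l (o ++ [true, false])) (d - o.count true - 1) ≤
          homDim 𝒜 (wordIdeal l (o ++ [false, true])) (d - o.count true - 1))



namespace SegreGr

set_option linter.unusedSectionVars false


section Poly

variable {K V : Type*} [Field K] [AddCommGroup V] [Module K V]

lemma poly_line {f : V → K} (hf : f ∈ polyFuns K V) (u w : V) :
    ∃ p : Polynomial K, ∀ t : K, f (u + t • w) = p.eval t := by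
  unfold polyFuns at hf
  induction hf using Algebra.adjoin_induction with
  | mem x hx =>
    obtain ⟨φ, rfl⟩ := hx
    exact ⟨Polynomial.C (φ u) + Polynomial.X * Polynomial.C (φ w), fun t => by
      simp only [map_add, map_smul, smul_eq_mul, Polynomial.eval_add, Polynomial.eval_mul,
        Polynomial.eval_C, Polynomial.eval_X]⟩
  | algebraMap c => exact ⟨Polynomial.C c, fun t => by simp⟩
  | add x y _ _ hx hy =>
    obtain ⟨p, hp⟩ := hx
    obtain ⟨q, hq⟩ := hy
    exact ⟨p + q, fun t => by simp [hp, hq]⟩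
  | mul x y _ _ hx hy =>
    obtain ⟨p, hp⟩ := hx
    obtain ⟨q, hq⟩ := hy
    exact ⟨p * q, fun t => by simp [hp, hq]⟩

lemma poly_two [Infinite K] {f g : V → K} (hf : f ∈ polyFuns K V) (hg : g ∈ polyFuns K V)
    {u v : V} (hu : f u ≠ 0) (hv : g v ≠ 0) :
    ∃ t : K, f (u + t • (v - u)) ≠ 0 ∧ g (u + t • (v - u)) ≠ 0 := by
  obtain ⟨p, hp⟩ := poly_line hf u (v - u)
  obtain ⟨q, hq⟩ := poly_line hg u (v - u)
  have hp0 : p ≠ 0 := by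
    rintro rfl
    exact hu (by simpa using hp 0)
  have hq0 : q ≠ 0 := by
    rintro rfl
    exact hv (by simpa using hq 1)
  have hpq : p * q ≠ 0 := mul_ne_zero hp0 hq0
  have : ∃ t, (p * q).eval t ≠ 0 := by
    by_contra! h
    exact hpq (Polynomial.funext (by simpa using h))
  obtain ⟨t, ht⟩ := this
  rw [Polynomial.eval_mul] at ht
  exact ⟨t, by rw [hp]; exact left_ne_zero_of_mul ht, by rw [hq]; exact right_ne_zero_of_mul ht⟩

/-- a property holding on a nonempty principal open set -/
def Gen (K : Type*) {V : Type*} [Field K] [AddCommGroup V] [Module K V] (P : V → Prop) : Prop :=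
  ∃ f ∈ polyFuns K V, (∃ v, f v ≠ 0) ∧ ∀ v, f v ≠ 0 → P v

lemma Gen.mono {P Q : V → Prop} (h : Gen K P) (hPQ : ∀ v, P v → Q v) : Gen K Q := by
  obtain ⟨f, hf, hne, hP⟩ := h
  exact ⟨f, hf, hne, fun v hv => hPQ v (hP v hv)⟩

lemma Gen.of_forall {P : V → Prop} (h : ∀ v, P v) : Gen K P :=
  ⟨1, one_mem _, ⟨0, by simp⟩, fun v _ => h v⟩

lemma Gen.and [Infinite K] {P Q : V → Prop} (hP : Gen K P) (hQ : Gen K Q) :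
    Gen K (fun v => P v ∧ Q v) := by
  obtain ⟨f, hf, ⟨u, hu⟩, hP⟩ := hP
  obtain ⟨g, hg, ⟨v, hv⟩, hQ⟩ := hQ
  obtain ⟨t, h1, h2⟩ := poly_two hf hg hu hv
  refine ⟨f * g, mul_mem hf hg, ⟨_, mul_ne_zero h1 h2⟩, fun w hw => ?_⟩
  exact ⟨hP w (left_ne_zero_of_mul hw), hQ w (right_ne_zero_of_mul hw)⟩

lemma Gen.forall_finite [Infinite K] {ι : Type*} {S : Set ι} (hS : S.Finite) {P : ι → V → Prop}
    (h : ∀ i ∈ S, Gen K (P i)) : Gen K (fun v => ∀ i ∈ S, P i v) := by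
  induction S, hS using Set.Finite.induction_on with
  | empty => exact Gen.of_forall (by simp)
  | insert _ _ ih =>
    refine ((h _ (Set.mem_insert _ _)).and
      (ih fun i hi => h i (Set.mem_insert_of_mem _ hi))).mono ?_
    rintro v ⟨h1, h2⟩ i (rfl | hi)
    · exact h1
    · exact h2 i hi

lemma poly_comp {V' : Type*} [AddCommGroup V'] [Module K V'] {f : V' → K}
    (hf : f ∈ polyFuns K V') (σ : V →ₗ[K] V') : (fun v => f (σ v)) ∈ polyFuns K V := by
  unfold polyFuns at hf
  induction hf using Algebra.adjoin_induction with
  | mem x hx =>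
    obtain ⟨φ, rfl⟩ := hx
    exact Algebra.subset_adjoin ⟨φ.comp σ, rfl⟩
  | algebraMap c => exact (polyFuns K V).algebraMap_mem c
  | add x y _ _ hx hy => exact add_mem hx hy
  | mul x y _ _ hx hy => exact mul_mem hx hy

lemma Gen.comp {P : V → Prop} (h : Gen K P) (σ : V ≃ₗ[K] V) : Gen K (fun v => P (σ v)) := by
  obtain ⟨f, hf, ⟨u, hu⟩, hP⟩ := h
  exact ⟨_, poly_comp hf σ.toLinearMap, ⟨σ.symm u, by simpa using hu⟩, fun v hv => hP _ hv⟩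

variable {E F G : Type*} [AddCommGroup E] [Module K E] [AddCommGroup F] [Module K F]
  [AddCommGroup G] [Module K G]

/-- polynomial families of linear maps -/
def PolyMap (A : V → E →ₗ[K] F) : Prop :=
  ∀ x, ∀ φ : F →ₗ[K] K, (fun v => φ (A v x)) ∈ polyFuns K V

lemma PolyMap.comp [FiniteDimensional K F] {A : V → F →ₗ[K] G} {B : V → E →ₗ[K] F}
    (hA : PolyMap A) (hB : PolyMap B) : PolyMap (fun v => (A v).comp (B v)) := by
  intro x φ
  let b := Module.finBasis K F
  have : (fun v => φ ((A v).comp (B v) x)) =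
      ∑ i, (fun v => b.coord i (B v x)) * (fun v => φ (A v (b i))) := by
    funext v
    simp only [LinearMap.comp_apply, Finset.sum_apply, Pi.mul_apply]
    conv_lhs => rw [← b.sum_repr (B v x)]
    simp only [map_sum, map_smul, smul_eq_mul, Module.Basis.coord_apply]
  rw [this]
  exact sum_mem fun i _ => mul_mem (hB _ _) (hA _ _)

lemma PolyMap.coprod {A : V → E →ₗ[K] G} {B : V → F →ₗ[K] G}
    (hA : PolyMap A) (hB : PolyMap B) : PolyMap (fun v => (A v).coprod (B v)) := by
  intro x φ
  have : (fun v => φ ((A v).coprod (B v) x)) =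
      (fun v => φ (A v x.1)) + (fun v => φ (B v x.2)) := by
    funext v; simp
  rw [this]
  exact add_mem (hA _ _) (hB _ _)

lemma PolyMap.const (A : E →ₗ[K] F) : PolyMap (fun _ : V => A) := fun x φ =>
  (polyFuns K V).algebraMap_mem (φ (A x))

lemma rank_open [FiniteDimensional K F] {A : V → E →ₗ[K] F}
    (hA : PolyMap A) (u : V) :
    Gen K (fun v => Module.finrank K (LinearMap.range (A u)) ≤
      Module.finrank K (LinearMap.range (A v))) := by
  set ρ := Module.finrank K (LinearMap.range (A u)) with hρ
  let b : Module.Basis (Fin ρ) K (LinearMap.range (A u)) := Module.finBasis K _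
  obtain ⟨p, hp⟩ := LinearMap.exists_leftInverse_of_injective
    (LinearMap.range (A u)).subtype (Submodule.ker_subtype _)
  have hp' : ∀ x, p ((LinearMap.range (A u)).subtype x) = x := fun x => LinearMap.congr_fun hp x
  choose w hw using fun i => (b i).2
  let φ : Fin ρ → F →ₗ[K] K := fun j => (b.coord j).comp p
  let M : V → Matrix (Fin ρ) (Fin ρ) K := fun v => Matrix.of fun i j => φ j (A v (w i))
  have hM : M u = 1 := by
    ext i j
    have : p (A u (w i)) = b i := by rw [hw]; exact hp' (b i)
    simp [M, φ, this, Matrix.one_apply, Finsupp.single_apply]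
  refine ⟨fun v => (M v).det, ?_, ⟨u, by simp [hM]⟩, fun v hv => ?_⟩
  · have : (fun v => (M v).det) = ∑ σ : Equiv.Perm (Fin ρ),
        (Equiv.Perm.sign σ : ℤ) • ∏ i, (fun v => φ i (A v (w (σ i)))) := by
      funext v
      rw [Matrix.det_apply]
      simp only [Finset.sum_apply, Pi.smul_apply, Finset.prod_apply]
      rfl
    rw [this]
    exact sum_mem fun σ _ => zsmul_mem (prod_mem fun i _ => hA _ _) _
  · have h1 : LinearIndependent K (M v).row := Matrix.linearIndependent_rows_of_det_ne_zero hv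
    let Φ : LinearMap.range (A v) →ₗ[K] (Fin ρ → K) :=
      (LinearMap.pi φ).comp (LinearMap.range (A v)).subtype
    have h2 : LinearIndependent K
        (fun i => (⟨A v (w i), LinearMap.mem_range_self _ _⟩ : LinearMap.range (A v))) := by
      apply LinearIndependent.of_comp Φ
      exact h1
    simpa using h2.fintype_card_le_finrank

lemma rank_gen [FiniteDimensional K F] {A : V → E →ₗ[K] F} (hA : PolyMap A) :
    ∃ ρ, Gen K (fun v => Module.finrank K (LinearMap.range (A v)) = ρ) := by
  let S : Set ℕ := Set.range fun v => Module.finrank K (LinearMap.range (A v))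
  have hS : BddAbove S := ⟨Module.finrank K F, by
    rintro _ ⟨v, rfl⟩; exact Submodule.finrank_le _⟩
  have hne : S.Nonempty := ⟨_, ⟨0, rfl⟩⟩
  obtain ⟨u, hu⟩ := Nat.sSup_mem hne hS
  refine ⟨sSup S, (rank_open hA u).mono fun v hv => ?_⟩
  apply le_antisymm (le_csSup hS ⟨v, rfl⟩)
  rw [← hu]; exact hv

/-- algebraic families of subspaces -/
def GenFam.{u, a, b, c} {K : Type a} {V : Type b} [Field K] [AddCommGroup V] [Module K V]
    {E : Type c} [AddCommGroup E] [Module K E] (N : V → Submodule K E) : Prop :=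
  ∃ (W T : Type u) (_ : AddCommGroup W) (_ : Module K W) (_ : AddCommGroup T) (_ : Module K T)
    (_ : FiniteDimensional K W) (_ : FiniteDimensional K T)
    (A : V → E →ₗ[K] T) (B : V → W →ₗ[K] T), PolyMap A ∧ PolyMap B ∧
      ∀ v, N v = (LinearMap.range (B v)).comap (A v)

lemma finrank_comap_range {W T : Type*} [AddCommGroup W] [Module K W] [AddCommGroup T] [Module K T]
    [FiniteDimensional K E] [FiniteDimensional K T] (A : E →ₗ[K] T) (B : W →ₗ[K] T) :
    Module.finrank K ((LinearMap.range B).comap A) + Module.finrank K (LinearMap.range (A.coprod B))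
      = Module.finrank K E + Module.finrank K (LinearMap.range B) := by
  rw [LinearMap.range_coprod]
  have h1 := Submodule.finrank_sup_add_finrank_inf_eq (LinearMap.range A) (LinearMap.range B)
  have h2 := LinearMap.finrank_range_add_finrank_ker A
  let C := A.domRestrict ((LinearMap.range B).comap A)
  have h3 := LinearMap.finrank_range_add_finrank_ker C
  have h4 : LinearMap.range C = LinearMap.range A ⊓ LinearMap.range B := by
    rw [LinearMap.range_domRestrict, Submodule.map_comap_eq]
  have h5 : Module.finrank K (LinearMap.ker C) = Module.finrank K (LinearMap.ker A) := by
    have : LinearMap.ker C = (LinearMap.ker A).comap ((LinearMap.range B).comap A).subtype := by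
      ext x; simp [C]
    rw [this]
    refine (Submodule.comapSubtypeEquivOfLe ?_).finrank_eq
    intro x hx
    simp only [LinearMap.mem_ker] at hx
    simp [hx]
  rw [h4] at h3
  omega

lemma GenFam.finrank [Infinite K] [FiniteDimensional K E] {N : V → Submodule K E}
    (h : GenFam.{u} N) : ∃ δ, Gen K (fun v => Module.finrank K (N v) = δ) := by
  obtain ⟨W, T, _, _, _, _, _, _, A, B, hA, hB, hN⟩ := h
  obtain ⟨ρ₁, h1⟩ := rank_gen hB
  obtain ⟨ρ₂, h2⟩ := rank_gen (hA.coprod hB)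
  refine ⟨Module.finrank K E + ρ₁ - ρ₂, (h1.and h2).mono ?_⟩
  rintro v ⟨h1, h2⟩
  have := finrank_comap_range (A v) (B v)
  rw [← hN] at this
  omega

lemma GenFam.bot {E : Type u} [AddCommGroup E] [Module K E] [FiniteDimensional K E] :
    GenFam.{u} (fun _ : V => (⊥ : Submodule K E)) := by
  refine ⟨E, E, inferInstance, inferInstance, inferInstance, inferInstance, inferInstance,
    inferInstance, fun _ => LinearMap.id, fun _ => 0, PolyMap.const _, PolyMap.const _, ?_⟩
  intro v; simp

lemma GenFam.comap [FiniteDimensional K E] {N : V → Submodule K E} (hN : GenFam.{u} N)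
    {L : V → F →ₗ[K] E} (hL : PolyMap L) : GenFam.{u} (fun v => (N v).comap (L v)) := by
  obtain ⟨W, T, _, _, _, _, _, _, A, B, hA, hB, hN⟩ := hN
  refine ⟨W, T, inferInstance, inferInstance, inferInstance, inferInstance, inferInstance,
    inferInstance, fun v => (A v).comp (L v), B, hA.comp hL, hB, ?_⟩
  intro v; beta_reduce; rw [hN, Submodule.comap_comp]

lemma GenFam.sup {F : Type u} [AddCommGroup F] [Module K F] [FiniteDimensional K F]
    [FiniteDimensional K E] {N : V → Submodule K E} (hN : GenFam.{u} N)
    {L : V → F →ₗ[K] E} (hL : PolyMap L) :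
    GenFam.{u} (fun v => N v ⊔ LinearMap.range (L v)) := by
  obtain ⟨W, T, _, _, _, _, _, _, A, B, hA, hB, hN⟩ := hN
  refine ⟨W × F, T, inferInstance, inferInstance, inferInstance, inferInstance, inferInstance,
    inferInstance, A, fun v => (B v).coprod ((A v).comp (L v)), hA, hB.coprod (hA.comp hL), ?_⟩
  intro v; beta_reduce; rw [hN]
  ext x
  simp only [Submodule.mem_sup, Submodule.mem_comap, LinearMap.mem_range]
  constructor
  · rintro ⟨y, ⟨w, hw⟩, _, ⟨z, rfl⟩, rfl⟩
    exact ⟨(w, z), by simp [hw]⟩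
  · rintro ⟨⟨w, z⟩, h⟩
    refine ⟨x - L v z, ⟨w, ?_⟩, _, ⟨z, rfl⟩, by simp⟩
    rw [map_sub, ← h]; simp

end Poly

section Word

lemma wordIdealAux_append {R : Type*} [CommRing R] (l : ℕ → R) (o p : List Bool) :
    ∀ (j : ℕ) (I : Ideal R), wordIdealAux l j I (o ++ p) =
      wordIdealAux l (j + o.length) (wordIdealAux l j I o) p := by
  induction o with
  | nil => intro j I; simp [wordIdealAux]
  | cons a o ih =>
    intro j I
    simp only [List.cons_append, wordIdealAux, ih, List.length_cons]
    congr 1; omega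

lemma wordIdeal_true {R : Type*} [CommRing R] (l : ℕ → R) (o : List Bool) :
    wordIdeal l (o ++ [true]) = (wordIdeal l o).colon (Ideal.span {l o.length}) := by
  simp [wordIdeal, wordIdealAux_append, wordIdealAux]

lemma wordIdeal_false {R : Type*} [CommRing R] (l : ℕ → R) (o : List Bool) :
    wordIdeal l (o ++ [false]) = wordIdeal l o ⊔ Ideal.span {l o.length} := by
  simp [wordIdeal, wordIdealAux_append, wordIdealAux]

lemma wordIdeal_congr {R : Type*} [CommRing R] (l l' : ℕ → R) (o : List Bool)
    (h : ∀ t < o.length, l t = l' t) : wordIdeal l o = wordIdeal l' o := by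
  induction o using List.reverseRecOn with
  | nil => rfl
  | append_singleton o a ih =>
    have h1 := ih fun t ht => h t (by simp; omega)
    have h2 := h o.length (by simp)
    cases a
    · rw [wordIdeal_false, wordIdeal_false, h1, h2]
    · rw [wordIdeal_true, wordIdeal_true, h1, h2]

lemma mem_colon_span {R : Type*} [CommRing R] (I : Ideal R) (a x : R) :
    x ∈ I.colon (Ideal.span {a}) ↔ x * a ∈ I := by
  rw [Submodule.mem_colon]
  constructor
  · intro h
    exact h a (Ideal.mem_span_singleton_self a)
  · intro h s hs
    obtain ⟨c, rfl⟩ := Ideal.mem_span_singleton'.1 hs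
    have := I.mul_mem_left c h
    rw [smul_eq_mul]
    convert this using 1
    ring

variable {K : Type*} {R : Type u} [Field K] [CommRing R] [Algebra K R]
    (𝒜 : ℕ → Submodule K R) [GradedAlgebra 𝒜]

lemma fd (h0 : 𝒜 0 = (1 : Submodule K R)) (hstd : ∀ m, 𝒜 (m + 1) = 𝒜 1 * 𝒜 m)
    [FiniteDimensional K (𝒜 1)] (e : ℕ) : FiniteDimensional K (𝒜 e) := by
  rw [FiniteDimensional, Module.Finite.iff_fg]
  induction e with
  | zero => rw [h0, Submodule.one_eq_span]; exact Submodule.fg_span_singleton _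
  | succ e ih => rw [hstd]; exact (Module.Finite.iff_fg.1 inferInstance).mul ih

lemma colon_homog {I : Ideal R} (hI : I.IsHomogeneous 𝒜) {a : R} (ha : a ∈ 𝒜 1) :
    (I.colon (Ideal.span {a})).IsHomogeneous 𝒜 := by
  intro i x hx
  rw [mem_colon_span] at hx ⊢
  have := hI (i + 1) hx
  rwa [DirectSum.coe_decompose_mul_add_of_right_mem 𝒜 ha] at this

lemma sup_homog {I : Ideal R} (hI : I.IsHomogeneous 𝒜) {a : R} (ha : a ∈ 𝒜 1) :
    (I ⊔ Ideal.span {a}).IsHomogeneous 𝒜 := by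
  refine hI.sup (Ideal.homogeneous_span 𝒜 _ ?_)
  rintro x rfl
  exact ⟨1, ha⟩

lemma word_homog {l : ℕ → R} (hl : ∀ t, l t ∈ 𝒜 1) (o : List Bool) :
    (wordIdeal l o).IsHomogeneous 𝒜 := by
  induction o using List.reverseRecOn with
  | nil => exact Ideal.IsHomogeneous.bot 𝒜
  | append_singleton o a ih =>
    cases a
    · rw [wordIdeal_false]; exact sup_homog 𝒜 ih (hl _)
    · rw [wordIdeal_true]; exact colon_homog 𝒜 ih (hl _)

/-- multiplication by a linear form -/
def mulL (a : 𝒜 1) (e : ℕ) : 𝒜 e →ₗ[K] 𝒜 (e + 1) where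
  toFun x := ⟨x * a, SetLike.mul_mem_graded x.2 a.2⟩
  map_add' x y := by ext; simp [add_mul]
  map_smul' c x := by ext; simp

/-- multiplication of linear forms by a form -/
def mulR {e : ℕ} (x : 𝒜 e) : 𝒜 1 →ₗ[K] 𝒜 (e + 1) where
  toFun a := ⟨x * a, SetLike.mul_mem_graded x.2 a.2⟩
  map_add' x y := by ext; simp [mul_add]
  map_smul' c x := by ext; simp

lemma mem_homComp {I : Ideal R} {e : ℕ} {x : 𝒜 e} : x ∈ homComp 𝒜 I e ↔ (x : R) ∈ I := Iff.rfl

lemma homComp_colon (I : Ideal R) (a : 𝒜 1) (e : ℕ) :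
    homComp 𝒜 (I.colon (Ideal.span {(a : R)})) e = (homComp 𝒜 I (e + 1)).comap (mulL 𝒜 a e) := by
  ext x
  rw [mem_homComp, mem_colon_span]
  rfl

lemma homComp_sup_zero {I : Ideal R} (hI : I.IsHomogeneous 𝒜) (a : 𝒜 1) :
    homComp 𝒜 (I ⊔ Ideal.span {(a : R)}) 0 = homComp 𝒜 I 0 := by
  ext x
  rw [mem_homComp, mem_homComp]
  refine ⟨fun h => ?_, fun h => Ideal.mem_sup_left h⟩
  obtain ⟨y, hy, z, hz, hyz⟩ := Submodule.mem_sup.1 h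
  obtain ⟨c, rfl⟩ := Ideal.mem_span_singleton'.1 hz
  have h1 := hI 0 hy
  have h2 : (DirectSum.decompose 𝒜 (c * a) 0 : R) = 0 :=
    DirectSum.coe_decompose_mul_of_right_mem_of_not_le 𝒜 a.2 (by omega)
  have h3 : (DirectSum.decompose 𝒜 (x : R) 0 : R) = x := DirectSum.decompose_of_mem_same 𝒜 x.2
  rw [← hyz, DirectSum.decompose_add, DirectSum.add_apply, Submodule.coe_add, h2, add_zero,
    hyz] at h3
  rwa [← h3]

lemma homComp_sup_succ {I : Ideal R} (hI : I.IsHomogeneous 𝒜) (a : 𝒜 1) (e : ℕ) :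
    homComp 𝒜 (I ⊔ Ideal.span {(a : R)}) (e + 1) =
      homComp 𝒜 I (e + 1) ⊔ LinearMap.range (mulL 𝒜 a e) := by
  ext x
  rw [mem_homComp]
  constructor
  · intro h
    obtain ⟨y, hy, z, hz, hyz⟩ := Submodule.mem_sup.1 h
    obtain ⟨c, rfl⟩ := Ideal.mem_span_singleton'.1 hz
    have h1 := hI (e + 1) hy
    have h2 := DirectSum.coe_decompose_mul_add_of_right_mem 𝒜 (i := e) (a := c) a.2
    have h3 : (DirectSum.decompose 𝒜 (x : R) (e + 1) : R) = x :=
      DirectSum.decompose_of_mem_same 𝒜 x.2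
    rw [← hyz, DirectSum.decompose_add, DirectSum.add_apply, Submodule.coe_add, h2, hyz] at h3
    refine Submodule.mem_sup.2 ⟨DirectSum.decompose 𝒜 y (e + 1), h1,
      mulL 𝒜 a e (DirectSum.decompose 𝒜 c e), LinearMap.mem_range_self _ _, ?_⟩
    ext
    exact h3
  · intro h
    obtain ⟨y, hy, _, ⟨z, rfl⟩, rfl⟩ := Submodule.mem_sup.1 h
    exact add_mem (Ideal.mem_sup_left hy)
      (Ideal.mem_sup_right (Ideal.mul_mem_left _ _ (Ideal.mem_span_singleton_self _)))

lemma homComp_mono {I J : Ideal R} (h : I ≤ J) (e : ℕ) : homComp 𝒜 I e ≤ homComp 𝒜 J e :=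
  fun _ hx => h hx

variable {V : Type*} [AddCommGroup V] [Module K V]

lemma mulL_poly {l : V → 𝒜 1} (hl : ∀ φ : 𝒜 1 →ₗ[K] K, (fun v => φ (l v)) ∈ polyFuns K V)
    (e : ℕ) : PolyMap (fun v => mulL 𝒜 (l v) e) := fun x φ => hl (φ.comp (mulR 𝒜 x))

lemma word_genFam (hfd : ∀ e, FiniteDimensional K (𝒜 e)) {l : V → ℕ → 𝒜 1}
    (hl : ∀ t, ∀ φ : 𝒜 1 →ₗ[K] K, (fun v => φ (l v t)) ∈ polyFuns K V) (o : List Bool) :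
    ∀ e, GenFam.{u} (fun v => homComp 𝒜 (wordIdeal (fun t => (l v t : R)) o) e) := by
  induction o using List.reverseRecOn with
  | nil =>
    intro e
    convert GenFam.bot (K := K) (V := V) (E := 𝒜 e) using 2
    ext x
    simp [mem_homComp, wordIdeal, wordIdealAux]
  | append_singleton o a ih =>
    intro e
    cases a
    · simp only [wordIdeal_false]
      cases e with
      | zero =>
        convert ih 0 using 2
        exact homComp_sup_zero 𝒜 (word_homog 𝒜 (fun t => (l _ t).2) o) _
      | succ e =>
        convert (ih (e + 1)).sup (mulL_poly 𝒜 (hl o.length) e) using 2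
        exact homComp_sup_succ 𝒜 (word_homog 𝒜 (fun t => (l _ t).2) o) _ _
    · simp only [wordIdeal_true]
      convert (ih (e + 1)).comap (mulL_poly 𝒜 (hl o.length) e) using 2
      exact homComp_colon 𝒜 _ _ _

lemma word_dim [Infinite K] (hfd : ∀ e, FiniteDimensional K (𝒜 e)) {l : V → ℕ → 𝒜 1}
    (hl : ∀ t, ∀ φ : 𝒜 1 →ₗ[K] K, (fun v => φ (l v t)) ∈ polyFuns K V) (o : List Bool) (e : ℕ) :
    ∃ δ, Gen K (fun v => homDim 𝒜 (wordIdeal (fun t => (l v t : R)) o) e = δ) :=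
  (word_genFam 𝒜 hfd hl o e).finrank

lemma irr_le (hstd : ∀ m, 𝒜 (m + 1) = 𝒜 1 * 𝒜 m) {I : Ideal R} (h : homComp 𝒜 I 1 = ⊤) :
    (HomogeneousIdeal.irrelevant 𝒜).toIdeal ≤ I := by
  rw [HomogeneousIdeal.toIdeal_irrelevant_le]
  intro i hi x hx
  obtain ⟨m, rfl⟩ : ∃ m, i = m + 1 := ⟨i - 1, by omega⟩
  have hx' : x ∈ 𝒜 1 * 𝒜 m := by rw [← hstd]; exact hx
  have hle : 𝒜 1 * 𝒜 m ≤ I.restrictScalars K := by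
    rw [Submodule.mul_le]
    intro a ha b hb
    apply I.mul_mem_right
    have : (⟨a, ha⟩ : 𝒜 1) ∈ homComp 𝒜 I 1 := by rw [h]; trivial
    exact this
  exact hle hx'

lemma irr_le_of_gen {ι : Type*} (g : MvPolynomial ι K →ₐ[K] R) (hsurj : Function.Surjective g)
    (hg1 : ∀ i, g (MvPolynomial.X i) ∈ 𝒜 1) {I : Ideal R}
    (h : ∀ i, g (MvPolynomial.X i) ∈ I) : (HomogeneousIdeal.irrelevant 𝒜).toIdeal ≤ I := by
  have key : ∀ p, ∃ c : K, g p - algebraMap K R c ∈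
      I ⊓ (HomogeneousIdeal.irrelevant 𝒜).toIdeal := by
    intro p
    induction p using MvPolynomial.induction_on with
    | C a => exact ⟨a, by simp [MvPolynomial.algHom_C]⟩
    | add p q hp hq =>
      obtain ⟨c, hc⟩ := hp
      obtain ⟨e, he⟩ := hq
      refine ⟨c + e, ?_⟩
      convert add_mem hc he using 1
      simp only [map_add]; ring
    | mul_X p i _ =>
      refine ⟨0, ?_⟩
      rw [map_zero, sub_zero, map_mul]
      apply Ideal.mul_mem_left
      exact ⟨h i, HomogeneousIdeal.mem_irrelevant_of_mem 𝒜 one_pos (hg1 i)⟩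
  intro x hx
  obtain ⟨p, rfl⟩ := hsurj x
  obtain ⟨c, hc⟩ := key p
  have h1 : algebraMap K R c ∈ (HomogeneousIdeal.irrelevant 𝒜).toIdeal := by
    simpa using sub_mem hx hc.2
  have h2 : algebraMap K R c = 0 := by
    have h3 := (HomogeneousIdeal.mem_irrelevant_iff 𝒜 _).1 h1
    rw [GradedRing.proj_apply, DirectSum.decompose_of_mem_same 𝒜
      (SetLike.algebraMap_mem_graded 𝒜 c)] at h3
    exact h3
  rw [h2, sub_zero] at hc
  exact hc.1

end Word

section Main

variable {K : Type*} {R : Type u} [Field K] [Infinite K] [CommRing R] [Algebra K R]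
    (𝒜 : ℕ → Submodule K R) [GradedAlgebra 𝒜]
    {M : Type*} [AddCommGroup M] [Module K M] {r : ℕ}

/-- the sequence of linear forms attached to a parameter -/
def seqOf (lin : M → 𝒜 1) (y : Fin r → M) (t : ℕ) : 𝒜 1 :=
  if h : t < r then lin (y ⟨t, h⟩) else 0

/-- word ideal attached to a parameter -/
def idl (lin : M → 𝒜 1) (y : Fin r → M) (o : List Bool) : Ideal R :=
  wordIdeal (fun t => (seqOf 𝒜 lin y t : R)) o

lemma seqOf_poly {lin : M → 𝒜 1}
    (hlin : ∀ φ : 𝒜 1 →ₗ[K] K, (fun m => φ (lin m)) ∈ polyFuns K M) (t : ℕ)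
    (φ : 𝒜 1 →ₗ[K] K) : (fun y : Fin r → M => φ (seqOf 𝒜 lin y t)) ∈ polyFuns K (Fin r → M) := by
  unfold seqOf
  split_ifs with h
  · exact poly_comp (hlin φ) (LinearMap.proj (R := K) (φ := fun _ : Fin r => M) ⟨t, h⟩)
  · simp only [map_zero]
    exact zero_mem _

lemma idl_congr {lin : M → 𝒜 1} {y z : Fin r → M} {o : List Bool}
    (h : ∀ t : Fin r, t.1 < o.length → y t = z t) : idl 𝒜 lin y o = idl 𝒜 lin z o := by
  apply wordIdeal_congr
  intro t ht
  unfold seqOf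
  split_ifs with hr
  · rw [h ⟨t, hr⟩ ht]
  · rfl

lemma sup_eq_iff_mem {I : Ideal R} (hfd : ∀ e, FiniteDimensional K (𝒜 e)) (a : 𝒜 1) :
    homDim 𝒜 (I ⊔ Ideal.span {(a : R)}) 1 = homDim 𝒜 I 1 ↔ (a : R) ∈ I := by
  constructor
  · intro h
    have := hfd 1
    have h2 := Submodule.eq_of_le_of_finrank_eq
      (homComp_mono 𝒜 (le_sup_left : I ≤ I ⊔ Ideal.span {(a : R)}) 1) h.symm
    have h3 : a ∈ homComp 𝒜 (I ⊔ Ideal.span {(a : R)}) 1 :=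
      Ideal.mem_sup_right (Ideal.mem_span_singleton_self _)
    rw [← h2] at h3
    exact h3
  · intro h
    rw [sup_eq_left.2]
    rwa [Ideal.span_singleton_le_iff_mem]

lemma gen_one (hfd : ∀ e, FiniteDimensional K (𝒜 e)) {lin : M → 𝒜 1}
    (hlin : ∀ φ : 𝒜 1 →ₗ[K] K, (fun m => φ (lin m)) ∈ polyFuns K M)
    (hspan : ∀ I : Ideal R, (∀ m, (lin m : R) ∈ I) → (HomogeneousIdeal.irrelevant 𝒜).toIdeal ≤ I)
    (o : List Bool) (ho : o.length < r) :
    Gen K (fun y : Fin r → M => ¬ (HomogeneousIdeal.irrelevant 𝒜).toIdeal ≤ idl 𝒜 lin y o →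
      (seqOf 𝒜 lin y o.length : R) ∉ idl 𝒜 lin y o) := by
  obtain ⟨δ, h1⟩ := word_dim 𝒜 hfd (seqOf_poly (r := r) 𝒜 hlin) o 1
  obtain ⟨δ', h2⟩ := word_dim 𝒜 hfd (seqOf_poly (r := r) 𝒜 hlin) (o ++ [false]) 1
  simp only [wordIdeal_false] at h2
  have h3 := h1.and h2
  by_cases hδ : δ' = δ
  · subst hδ
    obtain ⟨f, hf, hne, hP⟩ := h3
    have hmem : ∀ y, f y ≠ 0 → (seqOf 𝒜 lin y o.length : R) ∈ idl 𝒜 lin y o := by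
      intro y hy
      obtain ⟨e1, e2⟩ := hP y hy
      exact (sup_eq_iff_mem 𝒜 hfd _).1 (e2.trans e1.symm)
    refine ⟨f, hf, hne, fun y hy hirr => ?_⟩
    exfalso
    apply hirr
    apply hspan
    intro m
    by_contra hm
    have hm' : lin m ∉ homComp 𝒜 (idl 𝒜 lin y o) 1 := hm
    obtain ⟨φ, hφ, hφ2⟩ := Submodule.exists_le_ker_of_notMem hm'
    let z : Fin r → M := Function.update y ⟨o.length, ho⟩ m
    have hz : φ (seqOf 𝒜 lin z o.length) ≠ 0 := by
      simpa [seqOf, ho, z] using hφ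
    obtain ⟨t, ht1, ht2⟩ := poly_two hf (seqOf_poly 𝒜 hlin o.length φ) hy hz
    apply ht2
    have h5 := hmem _ ht1
    rw [idl_congr 𝒜 (z := y)] at h5
    · exact hφ2 h5
    · intro i hi
      have : i ≠ ⟨o.length, ho⟩ := by
        rintro rfl
        simp at hi
      simp [z, Function.update_of_ne this]
  · refine h3.mono ?_
    rintro y ⟨e1, e2⟩ _ hmem
    exact hδ (e2.symm.trans (((sup_eq_iff_mem 𝒜 hfd _).2 hmem).trans e1))

lemma gen_three (hfd : ∀ e, FiniteDimensional K (𝒜 e)) {lin : M → 𝒜 1}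
    (hlin : ∀ φ : 𝒜 1 →ₗ[K] K, (fun m => φ (lin m)) ∈ polyFuns K M)
    (o : List Bool) (ho : o.length + 2 ≤ r) (e : ℕ) :
    Gen K (fun y : Fin r → M => homDim 𝒜 (idl 𝒜 lin y (o ++ [true, false])) e ≤
      homDim 𝒜 (idl 𝒜 lin y (o ++ [false, true])) e) := by
  obtain ⟨δ, h1⟩ := word_dim 𝒜 hfd (seqOf_poly (r := r) 𝒜 hlin) (o ++ [true, false]) e
  let i : Fin r := ⟨o.length, by omega⟩
  let j : Fin r := ⟨o.length + 1, by omega⟩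
  let σ : (Fin r → M) ≃ₗ[K] (Fin r → M) := LinearEquiv.funCongrLeft K M (Equiv.swap i j)
  have hσ : ∀ y t, σ y t = y (Equiv.swap i j t) := fun y t => rfl
  refine (h1.and (h1.comp σ)).mono ?_
  rintro y ⟨e1, e2⟩
  have hI : idl 𝒜 lin (σ y) o = idl 𝒜 lin y o := by
    apply idl_congr
    intro t ht
    rw [hσ, Equiv.swap_apply_of_ne_of_ne]
    · rintro rfl; simp [i] at ht
    · rintro rfl; simp [j] at ht
  have hi : seqOf 𝒜 lin (σ y) o.length = seqOf 𝒜 lin y (o.length + 1) := by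
    have a1 : o.length < r := by omega
    have a2 : o.length + 1 < r := by omega
    simp only [seqOf, a1, a2, dif_pos, hσ]
    congr 2
    exact Equiv.swap_apply_left i j
  have hj : seqOf 𝒜 lin (σ y) (o.length + 1) = seqOf 𝒜 lin y o.length := by
    have a1 : o.length < r := by omega
    have a2 : o.length + 1 < r := by omega
    simp only [seqOf, a1, a2, dif_pos, hσ]
    congr 2
    exact Equiv.swap_apply_right i j
  have key : idl 𝒜 lin (σ y) (o ++ [true, false]) ≤ idl 𝒜 lin y (o ++ [false, true]) := by
    have w1 : idl 𝒜 lin (σ y) (o ++ [true, false]) =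
        (idl 𝒜 lin (σ y) o).colon (Ideal.span {(seqOf 𝒜 lin (σ y) o.length : R)}) ⊔
          Ideal.span {(seqOf 𝒜 lin (σ y) (o.length + 1) : R)} := by
      have : o ++ [true, false] = (o ++ [true]) ++ [false] := by simp
      rw [idl, this, wordIdeal_false, wordIdeal_true]
      simp [idl]
    have w2 : idl 𝒜 lin y (o ++ [false, true]) =
        (idl 𝒜 lin y o ⊔ Ideal.span {(seqOf 𝒜 lin y o.length : R)}).colon
          (Ideal.span {(seqOf 𝒜 lin y (o.length + 1) : R)}) := by
      have : o ++ [false, true] = (o ++ [false]) ++ [true] := by simp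
      rw [idl, this, wordIdeal_true, wordIdeal_false]
      simp [idl]
    rw [w1, w2, hI, hi, hj]
    refine sup_le ?_ ?_
    · intro x hx
      rw [mem_colon_span] at hx ⊢
      exact Ideal.mem_sup_left hx
    · rw [Ideal.span_singleton_le_iff_mem, mem_colon_span]
      exact Ideal.mem_sup_right (Ideal.mul_mem_right _ _ (Ideal.mem_span_singleton_self _))
  have := hfd e
  have h2 : homDim 𝒜 (idl 𝒜 lin (σ y) (o ++ [true, false])) e ≤
      homDim 𝒜 (idl 𝒜 lin y (o ++ [false, true])) e :=
    Submodule.finrank_mono (homComp_mono 𝒜 key e)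
  calc _ = δ := e1
    _ = _ := e2.symm
    _ ≤ _ := h2

lemma two_of_one (hfd : ∀ e, FiniteDimensional K (𝒜 e)) {lin : M → 𝒜 1} (y : Fin r → M)
    (h1 : ∀ o : List Bool, o.length < r →
      ¬ (HomogeneousIdeal.irrelevant 𝒜).toIdeal ≤ idl 𝒜 lin y o →
      (seqOf 𝒜 lin y o.length : R) ∉ idl 𝒜 lin y o) (o : List Bool) (ho : o.length ≤ r) :
    (HomogeneousIdeal.irrelevant 𝒜).toIdeal ≤ idl 𝒜 lin y o ∨
      o.count false ≤ homDim 𝒜 (idl 𝒜 lin y o) 1 := by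
  have := hfd 1
  induction o using List.reverseRecOn with
  | nil => right; simp
  | append_singleton o a ih =>
    rw [List.length_append, List.length_singleton] at ho
    by_cases hirr : (HomogeneousIdeal.irrelevant 𝒜).toIdeal ≤ idl 𝒜 lin y o
    · left
      refine hirr.trans ?_
      cases a
      · rw [idl, idl, wordIdeal_false]; exact le_sup_left
      · rw [idl, idl, wordIdeal_true]; exact Ideal.le_colon
    · right
      have h2 := (ih (by omega)).resolve_left hirr
      cases a
      · have h3 : idl 𝒜 lin y (o ++ [false]) =
            idl 𝒜 lin y o ⊔ Ideal.span {(seqOf 𝒜 lin y o.length : R)} := wordIdeal_false _ _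
        rw [h3]
        have h4 := mt (sup_eq_iff_mem 𝒜 hfd _).1 (h1 o (by omega) hirr)
        have h5 : homDim 𝒜 (idl 𝒜 lin y o) 1 ≤
          homDim 𝒜 (idl 𝒜 lin y o ⊔ Ideal.span {(seqOf 𝒜 lin y o.length : R)}) 1 :=
            Submodule.finrank_mono (homComp_mono 𝒜 le_sup_left 1)
        simp only [List.count_append, List.count_singleton_self]
        omega
      · have h3 : idl 𝒜 lin y o ≤ idl 𝒜 lin y (o ++ [true]) := by
          rw [idl, idl, wordIdeal_true]; exact Ideal.le_colon
        have h5 : homDim 𝒜 (idl 𝒜 lin y o) 1 ≤ homDim 𝒜 (idl 𝒜 lin y (o ++ [true])) 1 :=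
            Submodule.finrank_mono (homComp_mono 𝒜 h3 1)
        simp
        omega

lemma count_add (o : List Bool) : o.count true + o.count false = o.length := by
  induction o with
  | nil => rfl
  | cons a o ih => cases a <;> simp <;> omega

lemma gen_all (hstd : ∀ m, 𝒜 (m + 1) = 𝒜 1 * 𝒜 m)
    (hfd : ∀ e, FiniteDimensional K (𝒜 e)) {lin : M → 𝒜 1}
    (hlin : ∀ φ : 𝒜 1 →ₗ[K] K, (fun m => φ (lin m)) ∈ polyFuns K M)
    (hspan : ∀ I : Ideal R, (∀ m, (lin m : R) ∈ I) → (HomogeneousIdeal.irrelevant 𝒜).toIdeal ≤ I)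
    (d : ℕ) (hr : Module.finrank K (𝒜 1) + d ≤ r + 1) :
    Gen K (fun y : Fin r → M => GrProp 𝒜 (fun t => (seqOf 𝒜 lin y t : R)) r d) := by
  have hfin : {o : List Bool | o.length ≤ r}.Finite := List.finite_length_le Bool r
  have g1 := Gen.forall_finite (K := K) (V := Fin r → M) hfin
    (P := fun o y => o.length < r → ¬ (HomogeneousIdeal.irrelevant 𝒜).toIdeal ≤ idl 𝒜 lin y o →
      (seqOf 𝒜 lin y o.length : R) ∉ idl 𝒜 lin y o) (by
    intro o _
    by_cases h : o.length < r
    · exact (gen_one 𝒜 hfd hlin hspan o h).mono fun y hy _ => hy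
    · exact Gen.of_forall fun y hy => absurd hy h)
  have g3 := Gen.forall_finite (K := K) (V := Fin r → M) hfin
    (P := fun o y => o.length + 2 ≤ r →
      homDim 𝒜 (idl 𝒜 lin y (o ++ [true, false])) (d - o.count true - 1) ≤
      homDim 𝒜 (idl 𝒜 lin y (o ++ [false, true])) (d - o.count true - 1)) (by
    intro o _
    by_cases h : o.length + 2 ≤ r
    · exact (gen_three 𝒜 hfd hlin o h _).mono fun y hy _ => hy
    · exact Gen.of_forall fun y hy => absurd hy h)
  refine (g1.and g3).mono ?_
  rintro y ⟨h1, h3⟩ o ho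
  refine ⟨fun hirr hlt => h1 o ho hlt hirr, fun hlen hcount => ?_, fun h => h3 o ho h⟩
  rcases two_of_one 𝒜 hfd y (fun o hlt => h1 o hlt.le hlt) o ho with h | h
  · exact h
  · apply irr_le 𝒜 hstd
    have := hfd 1
    apply Submodule.eq_top_of_finrank_eq
    apply le_antisymm (Submodule.finrank_le _)
    have h4 := count_add o
    have h5 : o.count false ≤ Module.finrank K (homComp 𝒜 (idl 𝒜 lin y o) 1) := h
    change _ ≤ Module.finrank K (homComp 𝒜 (idl 𝒜 lin y o) 1)
    omega

end Main

end SegreGr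

/-- **(Gr,d) for products of general linear forms (Segre case).** `R` is a homomorphic
image, by a graded surjection `g`, of the Segre ring
`S = K[X_{1,i₁}⋯X_{s,i_s}]` (presented as the quotient of the polynomial ring on
variables indexed by `(j : Fin s) → Fin (nn j)`, one for each Segre monomial, by the
kernel of the evaluation `π` sending the variable `i` to `∏ j, X_{j, i j}`), the
generators going to degree-one elements of `R`.  With `n = dim_K R_1`, `d > 0` and
`r ≥ d + n - 1`, for general linear forms `l_{t,j}` of `K[X_{j,1},…,X_{j,n_j}]`
(`t = 1,…,r`), encoded by their coefficient tuples `y`, the `r` linear forms of `R`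
given by the images of the products `l_{t,1}⋯l_{t,s}` — namely
`∑ i, (∏ j, y t j (i j)) • g(X i)` — satisfy property (Gr,d). -/
theorem segre_products_satisfy_Gr
    {K R : Type*} [Field K] [Infinite K] [CommRing R] [Algebra K R]
    (𝒜 : ℕ → Submodule K R) [GradedAlgebra 𝒜]
    (h0 : 𝒜 0 = (1 : Submodule K R)) (hstd : ∀ m, 𝒜 (m + 1) = 𝒜 1 * 𝒜 m)
    [FiniteDimensional K (𝒜 1)]
    (s : ℕ) (nn : Fin s → ℕ)
    (g : MvPolynomial ((j : Fin s) → Fin (nn j)) K →ₐ[K] R)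
    (hsurj : Function.Surjective g)
    (hker : RingHom.ker (MvPolynomial.aeval
        (fun i : (j : Fin s) → Fin (nn j) =>
          ∏ j : Fin s, (MvPolynomial.X ⟨j, i j⟩ :
            MvPolynomial ((j : Fin s) × Fin (nn j)) K)) :
        MvPolynomial ((j : Fin s) → Fin (nn j)) K →ₐ[K]
          MvPolynomial ((j : Fin s) × Fin (nn j)) K) ≤ RingHom.ker g)
    (hg1 : ∀ i, g (MvPolynomial.X i) ∈ 𝒜 1)
    (d r : ℕ) (hd : 0 < d) (hr : Module.finrank K (𝒜 1) + d ≤ r + 1) :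
    ∃ U : Set (Fin r → (j : Fin s) → Fin (nn j) → K), IsZOpen K U ∧ U.Nonempty ∧
      ∀ y ∈ U, GrProp 𝒜
        (fun t => if h : t < r then
            ∑ i : (j : Fin s) → Fin (nn j),
              (∏ j : Fin s, y ⟨t, h⟩ j (i j)) • g (MvPolynomial.X i)
          else 0) r d := by
  classical
  have hfd := SegreGr.fd 𝒜 h0 hstd
  let lin : ((j : Fin s) → Fin (nn j) → K) → 𝒜 1 := fun m =>
    ∑ i : (j : Fin s) → Fin (nn j), (∏ j : Fin s, m j (i j)) •
      (⟨g (MvPolynomial.X i), hg1 i⟩ : 𝒜 1)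
  have hlinc : ∀ m, (lin m : R) = ∑ i : (j : Fin s) → Fin (nn j),
      (∏ j : Fin s, m j (i j)) • g (MvPolynomial.X i) := fun m => by simp [lin]
  have hlin : ∀ φ : 𝒜 1 →ₗ[K] K, (fun m => φ (lin m)) ∈ polyFuns K _ := by
    intro φ
    have : (fun m => φ (lin m)) = ∑ i : (j : Fin s) → Fin (nn j),
        (∏ j : Fin s, fun m : (j : Fin s) → Fin (nn j) → K => m j (i j)) *
          (fun _ => φ ⟨g (MvPolynomial.X i), hg1 i⟩) := by
      funext m
      simp only [lin, map_sum, map_smul, Finset.sum_apply, Pi.mul_apply, Finset.prod_apply,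
        smul_eq_mul]
    rw [this]
    refine sum_mem fun i _ => mul_mem (prod_mem fun j _ => ?_)
      ((polyFuns K _).algebraMap_mem (φ ⟨g (MvPolynomial.X i), hg1 i⟩))
    exact Algebra.subset_adjoin ⟨(LinearMap.proj (R := K) (φ := fun _ : Fin (nn j) => K) (i j)).comp
      (LinearMap.proj (R := K) (φ := fun j : Fin s => Fin (nn j) → K) j), rfl⟩
  have hspan : ∀ I : Ideal R, (∀ m, (lin m : R) ∈ I) →
      (HomogeneousIdeal.irrelevant 𝒜).toIdeal ≤ I := by
    intro I hI
    refine SegreGr.irr_le_of_gen 𝒜 g hsurj hg1 fun k => ?_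
    have h := hI fun j => Pi.single (k j) 1
    rw [hlinc, Finset.sum_eq_single k] at h
    · simpa using h
    · intro i _ hik
      obtain ⟨j, hj⟩ := Function.ne_iff.1 hik
      rw [Finset.prod_eq_zero (Finset.mem_univ j), zero_smul]
      exact Pi.single_eq_of_ne hj _
    · simp
  obtain ⟨f, hf, ⟨v, hv⟩, hP⟩ := SegreGr.gen_all (r := r) 𝒜 hstd hfd hlin hspan d hr
  refine ⟨{y | f y ≠ 0}, ⟨{f}, by simpa using hf, by ext y; simp⟩, ⟨v, hv⟩, fun y hy => ?_⟩
  convert hP y hy using 2 with t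
  unfold SegreGr.seqOf
  split_ifs with h
  · rw [hlinc]
  · rfl
end

section
/- Let K be a field of characteristic 0, let S = K[X_1^{a_1}⋯X_s^{a_s} | a_1 + ⋯ + a_s = b, a_i ≥ 0] be the b-th Veronese ring (the K-subalgebra of K[X_1,…,X_s] generated by all monomials of degree b), and let R be a standard graded algebra that is a homomorphic image of S via a graded surjection. Let n = dim_K R_1, d > 0, and r ≥ d + n − 1. Then for general linear forms l_1,…,l_r of K[X_1,…,X_s], the r linear forms of R given by the images of l_1^b,…,l_r^b satisfy property (Gr,d). -/
open Filter

section Helpers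

variable {K : Type*} [Field K]

section Poly
variable {V : Type*} [AddCommGroup V] [Module K V]

lemma polyFuns_line (a b : V) {f : V → K} (hf : f ∈ polyFuns K V) :
    ∃ p : Polynomial K, ∀ t : K, f (a + t • (b - a)) = p.eval t := by
  induction hf using Algebra.adjoin_induction with
  | mem x hx =>
    obtain ⟨φ, rfl⟩ := hx
    refine ⟨Polynomial.C (φ a) + Polynomial.X * Polynomial.C (φ (b - a)), fun t => ?_⟩
    simp
  | algebraMap c => exact ⟨Polynomial.C c, fun t => by simp⟩
  | add x y _ _ hx hy =>
    obtain ⟨p, hp⟩ := hx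
    obtain ⟨q, hq⟩ := hy
    exact ⟨p + q, fun t => by simp [hp, hq]⟩
  | mul x y _ _ hx hy =>
    obtain ⟨p, hp⟩ := hx
    obtain ⟨q, hq⟩ := hy
    exact ⟨p * q, fun t => by simp [hp, hq]⟩

lemma polyFuns_two_points [Infinite K] {f g : V → K} (hf : f ∈ polyFuns K V)
    (hg : g ∈ polyFuns K V) {a b : V} (ha : f a ≠ 0) (hb : g b ≠ 0) :
    ∃ t : K, f (a + t • (b - a)) ≠ 0 ∧ g (a + t • (b - a)) ≠ 0 := by
  obtain ⟨p, hp⟩ := polyFuns_line a b hf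
  obtain ⟨q, hq⟩ := polyFuns_line a b hg
  have hp0 : p ≠ 0 := by
    rintro rfl
    apply ha
    simpa using hp 0
  have hq0 : q ≠ 0 := by
    rintro rfl
    apply hb
    simpa using hq 1
  by_contra! h
  apply mul_ne_zero hp0 hq0
  apply Polynomial.funext
  intro t
  by_cases h1 : f (a + t • (b - a)) = 0
  · rw [Polynomial.eval_mul, ← hp, h1]; simp
  · rw [Polynomial.eval_mul, ← hq, h t h1]; simp

lemma polyFuns_comp {V' : Type*} [AddCommGroup V'] [Module K V'] (σ : V' →ₗ[K] V) {f : V → K}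
    (hf : f ∈ polyFuns K V) : (fun y => f (σ y)) ∈ polyFuns K V' := by
  induction hf using Algebra.adjoin_induction with
  | mem x hx =>
    obtain ⟨φ, rfl⟩ := hx
    exact Algebra.subset_adjoin ⟨φ ∘ₗ σ, rfl⟩
  | algebraMap c => exact (polyFuns K V').algebraMap_mem c
  | add x y _ _ hx hy => exact add_mem hx hy
  | mul x y _ _ hx hy => exact mul_mem hx hy

variable (K V) in
/-- The filter of sets containing a nonempty basic Zariski open set. -/
def genFilter [Infinite K] : Filter V where
  sets := {U | ∃ f ∈ polyFuns K V, (∃ y, f y ≠ 0) ∧ ∀ y, f y ≠ 0 → y ∈ U}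
  univ_sets := ⟨1, one_mem _, ⟨0, by simp⟩, by simp⟩
  sets_of_superset := by
    rintro U U' ⟨f, hf, h, h'⟩ hU
    exact ⟨f, hf, h, fun y hy => hU (h' y hy)⟩
  inter_sets := by
    rintro U U' ⟨f, hf, ⟨a, ha⟩, h⟩ ⟨g, hg, ⟨b, hb⟩, h'⟩
    refine ⟨f * g, mul_mem hf hg, ?_, ?_⟩
    · obtain ⟨t, h1, h2⟩ := polyFuns_two_points hf hg ha hb
      exact ⟨_, mul_ne_zero h1 h2⟩
    · intro y hy
      exact ⟨h y (left_ne_zero_of_mul hy), h' y (right_ne_zero_of_mul hy)⟩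

lemma mem_genFilter [Infinite K] {P : V → Prop} : (∀ᶠ y in genFilter K V, P y) ↔
    ∃ f ∈ polyFuns K V, (∃ y, f y ≠ 0) ∧ ∀ y, f y ≠ 0 → P y := Iff.rfl

variable {R : Type*} [CommRing R] [Algebra K R]

/-- Polynomial maps. -/
inductive PM : (V → R) → Prop
  | smul (f : V → K) (hf : f ∈ polyFuns K V) (u : R) : PM (fun y => f y • u)
  | add (p q : V → R) (hp : PM p) (hq : PM q) : PM (fun y => p y + q y)

lemma PM.const (u : R) : PM (K := K) (fun _ : V => u) := by
  have := PM.smul (K := K) (V := V) 1 (one_mem _) u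
  simpa using this

lemma PM.mul {p q : V → R} (hp : PM (K := K) p) (hq : PM (K := K) q) :
    PM (K := K) (fun y => p y * q y) := by
  induction hp with
  | smul f hf u =>
    induction hq with
    | smul g hg v =>
      have := PM.smul (f * g) (mul_mem hf hg) (u * v)
      simpa [smul_smul, mul_comm (f _)] using this
    | add q q' _ _ h h' => simpa [mul_add] using PM.add _ _ h h'
  | add p p' _ _ h h' => simpa [add_mul] using PM.add _ _ h h'

lemma PM.sum {ι : Type*} (s : Finset ι) (p : ι → V → R) (hp : ∀ i, PM (K := K) (p i)) :
    PM (K := K) (fun y => ∑ i ∈ s, p i y) := by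
  classical
  induction s using Finset.induction_on with
  | empty => simpa using PM.const (K := K) (V := V) (0 : R)
  | insert a s ha ih => simpa [Finset.sum_insert ha] using PM.add _ _ (hp a) ih

lemma PM.apply {p : V → R} (hp : PM (K := K) p) (ψ : R →ₗ[K] K) :
    (fun y => ψ (p y)) ∈ polyFuns K V := by
  induction hp with
  | smul f hf u =>
    have : (fun y => ψ (f y • u)) = (ψ u) • f := by
      ext y; simp [mul_comm]
    rw [this]
    exact Subalgebra.smul_mem _ hf _
  | add p q _ _ h h' =>
    simp only [map_add]
    exact add_mem h h'

lemma gen_const [Infinite K] (E : Submodule K R) [FiniteDimensional K E] (Q : Set (V → R))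
    (hQ : ∀ q ∈ Q, PM (K := K) q) (hE : ∀ q ∈ Q, ∀ y, q y ∈ E) :
    ∃ c, ∀ᶠ y in genFilter K V,
      Module.finrank K (Submodule.span K ((fun q => q y) '' Q)) = c := by
  set F : V → ℕ := fun y => Module.finrank K (Submodule.span K ((fun q => q y) '' Q)) with hF
  have hle : ∀ y, Submodule.span K ((fun q => q y) '' Q) ≤ E := by
    intro y
    rw [Submodule.span_le]
    rintro _ ⟨q, hq, rfl⟩
    exact hE q hq y
  have hfd : ∀ y, FiniteDimensional K (Submodule.span K ((fun q => q y) '' Q)) := fun y =>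
    Submodule.finiteDimensional_of_le (hle y)
  have hbd : ∀ y, F y ≤ Module.finrank K E := fun y => Submodule.finrank_mono (hle y)
  obtain ⟨y0, hy0⟩ : ∃ y0, ∀ y, F y ≤ F y0 := by
    have hne : (Set.range F).Nonempty := Set.range_nonempty F
    have hb : BddAbove (Set.range F) := ⟨Module.finrank K E, by rintro _ ⟨y, rfl⟩; exact hbd y⟩
    obtain ⟨y0, h⟩ := Nat.sSup_mem hne hb
    exact ⟨y0, fun y => h ▸ le_csSup hb ⟨y, rfl⟩⟩
  refine ⟨F y0, ?_⟩
  obtain ⟨B, hBt, hBs, hBi⟩ := exists_linearIndependent K ((fun q => q y0) '' Q)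
  have hfdB : FiniteDimensional K (Submodule.span K B) := hBs ▸ hfd y0
  have h1 : LinearIndependent K
      (fun x : B => (⟨x, Submodule.subset_span x.2⟩ : Submodule.span K B)) :=
    LinearIndependent.of_comp (Submodule.span K B).subtype hBi
  have : Finite B := h1.finite
  have : Fintype B := Fintype.ofFinite B
  classical
  choose q hqQ hqy using fun x : B => hBt x.2
  obtain ⟨Φ, hΦ⟩ := LinearMap.exists_extend (hBi.repr : _ →ₗ[K] (B →₀ K))
  have hΦv : ∀ x : B, Φ x = Finsupp.single x 1 := by
    intro x
    have h2 := hBi.repr_eq_single x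
      ⟨(x : R), Submodule.subset_span ⟨x, rfl⟩⟩ rfl
    rw [← h2]
    exact LinearMap.congr_fun hΦ ⟨(x : R), Submodule.subset_span ⟨x, rfl⟩⟩
  let M : Matrix B B (V → K) := fun i j y => Φ (q j y) i
  have hMmem : M.det ∈ polyFuns K V := by
    rw [Matrix.det_apply]
    refine sum_mem fun σ _ => ?_
    rw [Units.smul_def, zsmul_eq_mul]
    refine mul_mem (intCast_mem _ _) (prod_mem fun i _ => ?_)
    exact (hQ _ (hqQ i)).apply ((Finsupp.lapply (σ i)) ∘ₗ Φ)
  have hMev : ∀ y, M.det y = Matrix.det (fun i j => Φ (q j y) i : Matrix B B K) := by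
    intro y
    exact RingHom.map_det (Pi.evalRingHom (fun _ : V => K) y) M
  have hcard : F y0 = Fintype.card B := by
    rw [hF]
    simp only
    rw [← hBs, finrank_span_set_eq_card hBi, Set.toFinset_card]
  rw [mem_genFilter]
  refine ⟨M.det, hMmem, ⟨y0, ?_⟩, fun y hy => ?_⟩
  · rw [hMev]
    have : (fun i j => Φ (q j y0) i : Matrix B B K) = (1 : Matrix B B K) := by
      ext i j
      have h3 : q j y0 = (j : R) := hqy j
      rw [h3, hΦv, Matrix.one_apply, Finsupp.single_apply]
      simp [eq_comm]
    rw [this]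
    simp
  · apply le_antisymm (hy0 y)
    rw [hMev] at hy
    have h4 := Matrix.linearIndependent_cols_of_det_ne_zero hy
    have h5 : LinearIndependent K (fun j => q j y) := by
      refine LinearIndependent.of_comp ((Finsupp.lcoeFun (R := K)) ∘ₗ Φ) ?_
      exact h4
    rw [hcard, ← finrank_span_eq_card h5]
    have := hfd y
    apply Submodule.finrank_mono
    apply Submodule.span_mono
    rintro _ ⟨j, rfl⟩
    exact ⟨q j, hqQ j, rfl⟩

end Poly

lemma finrank_comap_aux {E F : Type*} [AddCommGroup E] [Module K E] [AddCommGroup F] [Module K F]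
    [FiniteDimensional K E] (f : E →ₗ[K] F) (W : Submodule K F) [FiniteDimensional K W] :
    Module.finrank K (Submodule.comap f W) + Module.finrank K (LinearMap.range f ⊔ W : Submodule K F)
      = Module.finrank K E + Module.finrank K W := by
  have h1 := Submodule.finrank_sup_add_finrank_inf_eq (LinearMap.range f) W
  have h2 := LinearMap.finrank_range_add_finrank_ker f
  have h3 := LinearMap.finrank_range_add_finrank_ker (f.domRestrict (Submodule.comap f W))
  have h4 : LinearMap.range (f.domRestrict (Submodule.comap f W)) = LinearMap.range f ⊓ W := by
    rw [LinearMap.range_domRestrict, Submodule.map_comap_eq]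
  have h5 : Module.finrank K (LinearMap.ker (f.domRestrict (Submodule.comap f W)))
      = Module.finrank K (LinearMap.ker f) := by
    rw [LinearMap.ker_domRestrict]
    have hle : LinearMap.ker f ≤ Submodule.comap f W := by
      intro x hx
      have : f x = 0 := hx
      simp [this]
    exact (Submodule.comapSubtypeEquivOfLe hle).finrank_eq
  rw [h4, h5] at h3
  omega

section Graded

variable {R : Type*} [CommRing R] [Algebra K R] (𝒜 : ℕ → Submodule K R) [GradedAlgebra 𝒜]

lemma finDim_graded (h0 : 𝒜 0 = (1 : Submodule K R)) (hstd : ∀ m, 𝒜 (m + 1) = 𝒜 1 * 𝒜 m)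
    [FiniteDimensional K (𝒜 1)] (m : ℕ) : FiniteDimensional K (𝒜 m) := by
  rw [← Submodule.fg_iff_finiteDimensional]
  induction m with
  | zero =>
    rw [h0, Submodule.one_eq_span]
    exact Submodule.fg_span_singleton 1
  | succ m ih =>
    rw [hstd]
    exact Submodule.FG.mul ((Submodule.fg_iff_finiteDimensional _).2 inferInstance) ih

lemma irrelevant_le (hstd : ∀ m, 𝒜 (m + 1) = 𝒜 1 * 𝒜 m) (I : Ideal R)
    (hI : 𝒜 1 ≤ Submodule.restrictScalars K I) :
    (HomogeneousIdeal.irrelevant 𝒜).toIdeal ≤ I := by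
  classical
  intro x hx
  have hx0 : (DirectSum.decompose 𝒜 x 0 : R) = 0 :=
    (HomogeneousIdeal.mem_irrelevant_iff 𝒜 x).1 hx
  rw [← DirectSum.sum_support_decompose 𝒜 x]
  refine sum_mem fun i _ => ?_
  cases i with
  | zero => rw [hx0]; exact zero_mem _
  | succ i =>
    have h : (DirectSum.decompose 𝒜 x (i + 1) : R) ∈ 𝒜 1 * 𝒜 i := by
      rw [← hstd]; exact SetLike.coe_mem _
    have hle : 𝒜 1 * 𝒜 i ≤ Submodule.restrictScalars K I := by
      rw [Submodule.mul_le]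
      intro a ha c _
      exact I.mul_mem_right c (hI ha)
    exact hle h

lemma homDim_mono [∀ m, FiniteDimensional K (𝒜 m)] {I J : Ideal R} (h : I ≤ J) (e : ℕ) :
    homDim 𝒜 I e ≤ homDim 𝒜 J e :=
  Submodule.finrank_mono (fun _ hx => h hx)

lemma homDim_lt [∀ m, FiniteDimensional K (𝒜 m)] {I J : Ideal R} (h : I ≤ J) (e : ℕ)
    {x : R} (hx : x ∈ 𝒜 e) (hxJ : x ∈ J) (hxI : x ∉ I) :
    homDim 𝒜 I e < homDim 𝒜 J e := by
  apply Submodule.finrank_lt_finrank_of_lt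
  refine lt_of_le_of_ne (fun _ hx => h hx) fun he => hxI ?_
  have : (⟨x, hx⟩ : 𝒜 e) ∈ homComp 𝒜 J e := hxJ
  rw [← he] at this
  exact this

lemma le_of_homDim [∀ m, FiniteDimensional K (𝒜 m)] {I : Ideal R} {e : ℕ}
    (h : Module.finrank K (𝒜 e) ≤ homDim 𝒜 I e) : 𝒜 e ≤ Submodule.restrictScalars K I := by
  have : homComp 𝒜 I e = ⊤ := Submodule.eq_top_of_finrank_eq
    (le_antisymm (Submodule.finrank_le _) h)
  intro x hx
  have h2 : (⟨x, hx⟩ : 𝒜 e) ∈ homComp 𝒜 I e := this ▸ Submodule.mem_top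
  exact h2

variable {V : Type*} [AddCommGroup V] [Module K V]

/-- Multiples in degree `N` of the forms in `G`. -/
def degSet (G : Set (V → R)) (N : ℕ) : Set (V → R) :=
  {q | ∃ p ∈ G, ∃ k i : ℕ, ∃ u ∈ 𝒜 i, (∀ y, p y ∈ 𝒜 k) ∧ i + k = N ∧ q = fun y => u * p y}

lemma degSet_span (G : Set (V → R)) (hG : ∀ p ∈ G, ∃ k, ∀ y, p y ∈ 𝒜 k) (N : ℕ) (y : V) :
    (Submodule.restrictScalars K (Ideal.span ((fun p => p y) '' G))) ⊓ 𝒜 N =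
      Submodule.span K ((fun q => q y) '' degSet 𝒜 G N) := by
  apply le_antisymm
  · rintro x ⟨hx, hxN⟩
    have key : ∀ x ∈ Ideal.span ((fun p => p y) '' G), (DirectSum.decompose 𝒜 x N : R) ∈
        Submodule.span K ((fun q => q y) '' degSet 𝒜 G N) := by
      intro x hx
      induction hx using Submodule.closure_induction with
      | zero => simp
      | add x z _ _ hx hz =>
        rw [DirectSum.decompose_add]
        exact add_mem hx hz
      | smul_mem a x h =>
        obtain ⟨p, hp, rfl⟩ := h
        obtain ⟨k, hk⟩ := hG p hp
        rw [smul_eq_mul, DirectSum.coe_decompose_mul_of_right_mem 𝒜 N (hk y)]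
        split_ifs with hkN
        · apply Submodule.subset_span
          exact ⟨_, ⟨p, hp, k, N - k, _, SetLike.coe_mem (DirectSum.decompose 𝒜 a (N - k)), hk,
            by omega, rfl⟩, rfl⟩
        · exact zero_mem _
    have := key x hx
    rwa [DirectSum.decompose_of_mem_same 𝒜 hxN] at this
  · rw [Submodule.span_le]
    rintro _ ⟨_, ⟨p, hp, k, i, u, hu, hk, rfl, rfl⟩, rfl⟩
    refine ⟨Ideal.mul_mem_left _ _ (Ideal.subset_span ⟨p, hp, rfl⟩), SetLike.mul_mem_graded hu (hk y)⟩

lemma gen_const_colon [Infinite K] [∀ m, FiniteDimensional K (𝒜 m)]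
    (G : Set (V → R)) (hG : ∀ p ∈ G, ∃ k, ∀ y, p y ∈ 𝒜 k) (hGP : ∀ p ∈ G, PM (K := K) p)
    (L : V → R) (hL : PM (K := K) L) (c : ℕ) (hLc : ∀ y, L y ∈ 𝒜 c) (e : ℕ) :
    ∃ m, ∀ᶠ y in genFilter K V, homDim 𝒜
      ((Ideal.span ((fun p => p y) '' G)).colon (Ideal.span {L y})) e = m := by
  have hQ : ∀ q ∈ degSet 𝒜 G (e + c), PM (K := K) q := by
    rintro _ ⟨p, hp, k, i, u, hu, hk, hN, rfl⟩
    exact (PM.const u).mul (hGP p hp)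
  have hQE : ∀ q ∈ degSet 𝒜 G (e + c), ∀ y, q y ∈ 𝒜 (e + c) := by
    rintro _ ⟨p, hp, k, i, u, hu, hk, hN, rfl⟩ y
    rw [← hN]
    exact SetLike.mul_mem_graded hu (hk y)
  let Q2 : Set (V → R) := {q | ∃ u ∈ 𝒜 e, q = fun y => u * L y}
  obtain ⟨m1, h1⟩ := gen_const (𝒜 (e + c)) (degSet 𝒜 G (e + c)) hQ hQE
  obtain ⟨m2, h2⟩ := gen_const (𝒜 (e + c)) (Q2 ∪ degSet 𝒜 G (e + c))
    (by
      rintro q (⟨u, hu, rfl⟩ | hq)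
      · exact (PM.const u).mul hL
      · exact hQ q hq)
    (by
      rintro q (⟨u, hu, rfl⟩ | hq) y
      · exact SetLike.mul_mem_graded hu (hLc y)
      · exact hQE q hq y)
  refine ⟨Module.finrank K (𝒜 e) + m1 - m2, ?_⟩
  filter_upwards [h1, h2] with y hy1 hy2
  let f : 𝒜 e →ₗ[K] R := (LinearMap.mulRight K (L y)) ∘ₗ (𝒜 e).subtype
  have hfd : FiniteDimensional K (Submodule.span K ((fun q => q y) '' degSet 𝒜 G (e + c))) := by
    apply Submodule.finiteDimensional_of_le (S₂ := 𝒜 (e + c))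
    rw [Submodule.span_le]
    rintro _ ⟨q, hq, rfl⟩
    exact hQE q hq y
  have h3 := finrank_comap_aux f (Submodule.span K ((fun q => q y) '' degSet 𝒜 G (e + c)))
  have h4 : LinearMap.range f ⊔ Submodule.span K ((fun q => q y) '' degSet 𝒜 G (e + c)) =
      Submodule.span K ((fun q => q y) '' (Q2 ∪ degSet 𝒜 G (e + c))) := by
    rw [Set.image_union, Submodule.span_union]
    congr 1
    apply le_antisymm
    · rintro _ ⟨u, rfl⟩
      exact Submodule.subset_span ⟨_, ⟨u, u.2, rfl⟩, rfl⟩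
    · rw [Submodule.span_le]
      rintro _ ⟨_, ⟨u, hu, rfl⟩, rfl⟩
      exact ⟨⟨u, hu⟩, rfl⟩
  have h5 : Submodule.comap f (Submodule.span K ((fun q => q y) '' degSet 𝒜 G (e + c))) =
      homComp 𝒜 ((Ideal.span ((fun p => p y) '' G)).colon (Ideal.span {L y})) e := by
    rw [← degSet_span 𝒜 G hG]
    ext u
    have : ((u : R) ∈ ((Ideal.span ((fun p => p y) '' G)).colon (Ideal.span {L y}))) ↔
      (u : R) * L y ∈ Ideal.span ((fun p => p y) '' G) := Ideal.mem_colon_span_singleton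
    constructor
    · intro hu
      exact this.2 hu.1
    · intro hu
      exact ⟨this.1 hu, SetLike.mul_mem_graded u.2 (hLc y)⟩
  rw [h4, h5, hy1, hy2] at h3
  unfold homDim
  omega

lemma wordIdealAux_form (l : V → ℕ → R) (hl : ∀ t, PM (K := K) (fun y => l y t))
    (hl1 : ∀ y t, l y t ∈ 𝒜 1) (o : List Bool) :
    ∀ (j : ℕ) (G : Set (V → R)) (L : V → R) (c : ℕ)
      (_ : ∀ p ∈ G, ∃ k, ∀ y, p y ∈ 𝒜 k) (_ : ∀ p ∈ G, PM (K := K) p)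
      (_ : PM (K := K) L) (_ : ∀ y, L y ∈ 𝒜 c),
    ∃ (G' : Set (V → R)) (L' : V → R) (c' : ℕ),
      (∀ p ∈ G', ∃ k, ∀ y, p y ∈ 𝒜 k) ∧ (∀ p ∈ G', PM (K := K) p) ∧
      (PM (K := K) L') ∧ (∀ y, L' y ∈ 𝒜 c') ∧
      ∀ y, wordIdealAux (l y) j
        ((Ideal.span ((fun p => p y) '' G)).colon (Ideal.span {L y})) o =
        (Ideal.span ((fun p => p y) '' G')).colon (Ideal.span {L' y}) := by
  induction o with
  | nil =>
    intro j G L c h1 h2 h3 h4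
    exact ⟨G, L, c, h1, h2, h3, h4, fun y => rfl⟩
  | cons a o ih =>
    intro j G L c h1 h2 h3 h4
    have hLl : PM (K := K) (fun y => L y * l y j) := h3.mul (hl j)
    have hLd : ∀ y, L y * l y j ∈ 𝒜 (c + 1) := fun y => SetLike.mul_mem_graded (h4 y) (hl1 y j)
    cases a with
    | true =>
      obtain ⟨G', L', c', k1, k2, k3, k4, k5⟩ := ih (j + 1) G (fun y => L y * l y j) (c + 1)
        h1 h2 hLl hLd
      refine ⟨G', L', c', k1, k2, k3, k4, fun y => ?_⟩
      rw [← k5 y]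
      simp only [wordIdealAux, if_true]
      congr 1
      ext x
      rw [Ideal.mem_colon_span_singleton, Ideal.mem_colon_span_singleton,
        Ideal.mem_colon_span_singleton]
      rw [mul_assoc, mul_comm (l y j)]
    | false =>
      obtain ⟨G', L', c', k1, k2, k3, k4, k5⟩ := ih (j + 1) (insert (fun y => L y * l y j) G) L c
        (by
          rintro p (rfl | hp)
          · exact ⟨c + 1, hLd⟩
          · exact h1 p hp)
        (by
          rintro p (rfl | hp)
          · exact hLl
          · exact h2 p hp)
        h3 h4
      refine ⟨G', L', c', k1, k2, k3, k4, fun y => ?_⟩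
      rw [← k5 y]
      simp only [wordIdealAux, Bool.false_eq_true, if_false]
      congr 1
      ext x
      rw [Ideal.mem_colon_span_singleton, Set.image_insert_eq, Ideal.span_insert,
        Submodule.mem_sup, Submodule.mem_sup]
      constructor
      · rintro ⟨u, hu, v, hv, rfl⟩
        rw [Ideal.mem_colon_span_singleton] at hu
        obtain ⟨w, rfl⟩ := Ideal.mem_span_singleton'.1 hv
        exact ⟨w * (L y * l y j), Ideal.mul_mem_left _ _ (Ideal.mem_span_singleton_self _),
          u * L y, hu, by ring⟩
      · rintro ⟨v, hv, u, hu, h⟩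
        obtain ⟨w, rfl⟩ := Ideal.mem_span_singleton'.1 hv
        refine ⟨x - w * l y j, ?_, w * l y j, Ideal.mul_mem_left _ _ (Ideal.mem_span_singleton_self _),
          by ring⟩
        rw [Ideal.mem_colon_span_singleton]
        have : (x - w * l y j) * L y = u := by linear_combination -h
        rw [this]
        exact hu

lemma gen_const_word [Infinite K] [∀ m, FiniteDimensional K (𝒜 m)] (l : V → ℕ → R)
    (hl : ∀ t, PM (K := K) (fun y => l y t))
    (hl1 : ∀ y t, l y t ∈ 𝒜 1) (o : List Bool) (e : ℕ) :
    ∃ m, ∀ᶠ y in genFilter K V, homDim 𝒜 (wordIdeal (l y) o) e = m := by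
  obtain ⟨G', L', c', k1, k2, k3, k4, k5⟩ := wordIdealAux_form 𝒜 l hl hl1 o 0 ∅ (fun _ => 1) 0
    (by simp) (by simp) (PM.const 1) (fun _ => SetLike.GradedOne.one_mem)
  obtain ⟨m, hm⟩ := gen_const_colon 𝒜 G' k1 k2 L' k3 c' k4 e
  refine ⟨m, ?_⟩
  filter_upwards [hm] with y hy
  rw [← hy, ← k5 y]
  unfold wordIdeal
  congr 2
  ext x
  rw [Ideal.mem_colon_span_singleton]
  simp

end Graded

lemma wordIdealAux_append {R : Type*} [CommRing R] (l : ℕ → R) (o o' : List Bool) :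
    ∀ (j : ℕ) (I : Ideal R), wordIdealAux l j I (o ++ o') =
      wordIdealAux l (j + o.length) (wordIdealAux l j I o) o' := by
  induction o with
  | nil => intro j I; rfl
  | cons a o ih =>
    intro j I
    simp only [List.cons_append, wordIdealAux, ih, List.length_cons]
    congr 1
    omega

lemma wordIdeal_true {R : Type*} [CommRing R] (l : ℕ → R) (o : List Bool) :
    wordIdeal l (o ++ [true]) = (wordIdeal l o).colon (Ideal.span {l o.length}) := by
  simp [wordIdeal, wordIdealAux_append, wordIdealAux]

lemma wordIdeal_false {R : Type*} [CommRing R] (l : ℕ → R) (o : List Bool) :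
    wordIdeal l (o ++ [false]) = (wordIdeal l o) ⊔ (Ideal.span {l o.length}) := by
  simp [wordIdeal, wordIdealAux_append, wordIdealAux]

lemma wordIdeal_congr {R : Type*} [CommRing R] (l l' : ℕ → R) (o : List Bool)
    (h : ∀ t < o.length, l t = l' t) : wordIdeal l o = wordIdeal l' o := by
  induction o using List.reverseRecOn with
  | nil => rfl
  | append_singleton o a ih =>
    have h1 := ih (fun t ht => h t (by simp; omega))
    have h2 := h o.length (by simp)
    cases a
    · rw [wordIdeal_false, wordIdeal_false, h1, h2]
    · rw [wordIdeal_true, wordIdeal_true, h1, h2]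

lemma PM.comp {V V' R : Type*} [AddCommGroup V] [Module K V] [AddCommGroup V'] [Module K V']
    [CommRing R] [Algebra K R] (σ : V' →ₗ[K] V) {p : V → R} (hp : PM (K := K) p) :
    PM (K := K) (fun y => p (σ y)) := by
  induction hp with
  | smul f hf u => exact PM.smul _ (polyFuns_comp σ hf) u
  | add p q _ _ h h' => exact PM.add _ _ h h'

section Main

variable {R : Type*} [CommRing R] [Algebra K R] (𝒜 : ℕ → Submodule K R) [GradedAlgebra 𝒜]
  {W : Type*} [AddCommGroup W] [Module K W]

lemma gen_Gr_aux [Infinite K] (h0 : 𝒜 0 = (1 : Submodule K R))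
    (hstd : ∀ m, 𝒜 (m + 1) = 𝒜 1 * 𝒜 m) [FiniteDimensional K (𝒜 1)]
    (φ : W → R) (hφ : PM (K := K) φ) (hφ1 : ∀ z, φ z ∈ 𝒜 1)
    (hφn : ∀ ψ : R →ₗ[K] K, (∀ z, ψ (φ z) = 0) → ∀ x ∈ 𝒜 1, ψ x = 0)
    (d r : ℕ) (hr : Module.finrank K (𝒜 1) + d ≤ r + 1) :
    ∀ᶠ y in genFilter K (Fin r → W),
      GrProp 𝒜 (fun t => if h : t < r then φ (y ⟨t, h⟩) else 0) r d := by
  have hfd : ∀ m, FiniteDimensional K (𝒜 m) := finDim_graded 𝒜 h0 hstd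
  set l : (Fin r → W) → ℕ → R := fun y t => if h : t < r then φ (y ⟨t, h⟩) else 0 with hl_def
  have hl : ∀ t, PM (K := K) (fun y => l y t) := by
    intro t
    by_cases h : t < r
    · simp only [hl_def, h, dif_pos]
      exact PM.comp (LinearMap.proj (R := K) (φ := fun _ : Fin r => W) ⟨t, h⟩) hφ
    · simp only [hl_def, h, dif_neg, not_false_eq_true]
      exact PM.const 0
  have hl1 : ∀ y t, l y t ∈ 𝒜 1 := by
    intro y t
    by_cases h : t < r
    · simp only [hl_def, h, dif_pos]
      exact hφ1 _
    · simp only [hl_def, h, dif_neg, not_false_eq_true]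
      exact zero_mem _
  have hconst := gen_const_word 𝒜 l hl hl1
  -- first property
  have hA : ∀ o : List Bool, o.length < r → ∀ᶠ y in genFilter K (Fin r → W),
      (¬ 𝒜 1 ≤ Submodule.restrictScalars K (wordIdeal (l y) o) →
        l y o.length ∉ wordIdeal (l y) o) := by
    intro o ho
    obtain ⟨c, hc⟩ := hconst o 1
    obtain ⟨c', hc'⟩ := hconst (o ++ [false]) 1
    obtain ⟨f, hf, hne, hfy⟩ := mem_genFilter.1 (hc.and hc')
    refine mem_genFilter.2 ⟨f, hf, hne, fun y hy hnot hmem => ?_⟩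
    have hcc : c = c' := by
      rw [← (hfy y hy).1, ← (hfy y hy).2, wordIdeal_false]
      congr 1
      symm
      rw [sup_eq_left, Ideal.span_singleton_le_iff_mem]
      exact hmem
    obtain ⟨x, hx1, hx⟩ := Set.not_subset.1 hnot
    obtain ⟨ψ, hψx, hψ⟩ := Submodule.exists_le_ker_of_notMem hx
    have : ∃ z, ψ (φ z) ≠ 0 := by
      by_contra! h
      exact hψx (hφn ψ h x hx1)
    obtain ⟨z, hz⟩ := this
    set i : Fin r := ⟨o.length, ho⟩ with hi
    have hli : ∀ y, l y o.length = φ (y i) := fun y => by simp [hl_def, ho, hi]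
    obtain ⟨t, ht1, ht2⟩ := polyFuns_two_points hf ((hl o.length).apply ψ) (a := y)
      (b := Function.update y i z) hy (by simpa [hli] using hz)
    set y' := y + t • (Function.update y i z - y) with hy'
    have hI : wordIdeal (l y') o = wordIdeal (l y) o := by
      apply wordIdeal_congr
      intro t' ht'
      have h1 : t' < r := by omega
      have h2 : (⟨t', h1⟩ : Fin r) ≠ i := by
        simp [hi, Fin.ext_iff]; omega
      simp only [hl_def, h1, dif_pos, hy']
      simp [Function.update_of_ne h2]
    have hnm : l y' o.length ∉ wordIdeal (l y') o := by
      rw [hI]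
      intro h
      exact ht2 (hψ h)
    have hlt : homDim 𝒜 (wordIdeal (l y') o) 1 < homDim 𝒜 (wordIdeal (l y') (o ++ [false])) 1 := by
      rw [wordIdeal_false]
      exact homDim_lt 𝒜 le_sup_left 1 (hl1 _ _)
        (Ideal.mem_sup_right (Ideal.mem_span_singleton_self _)) hnm
    rw [(hfy y' ht1).1, (hfy y' ht1).2] at hlt
    omega
  -- third property
  have hB : ∀ o : List Bool, o.length + 2 ≤ r → ∀ e, ∀ᶠ y in genFilter K (Fin r → W),
      homDim 𝒜 (wordIdeal (l y) (o ++ [true, false])) e ≤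
        homDim 𝒜 (wordIdeal (l y) (o ++ [false, true])) e := by
    intro o ho e
    obtain ⟨c, hc⟩ := hconst (o ++ [true, false]) e
    let i : Fin r := ⟨o.length, by omega⟩
    let i' : Fin r := ⟨o.length + 1, by omega⟩
    let σ : (Fin r → W) →ₗ[K] (Fin r → W) := LinearMap.funLeft K W (Equiv.swap i i')
    have hc2 : ∀ᶠ y in genFilter K (Fin r → W),
        homDim 𝒜 (wordIdeal (l (σ y)) (o ++ [true, false])) e = c := by
      obtain ⟨f, hf, ⟨y0, hy0⟩, hfy⟩ := mem_genFilter.1 hc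
      refine mem_genFilter.2 ⟨_, polyFuns_comp σ hf, ⟨σ y0, ?_⟩, fun y hy => hfy _ hy⟩
      have : σ (σ y0) = y0 := by
        ext j
        simp [σ, LinearMap.funLeft]
      rw [this]
      exact hy0
    filter_upwards [hc, hc2] with y h1 h2
    rw [h1, ← h2]
    apply homDim_mono
    have e1 : o ++ [true, false] = (o ++ [true]) ++ [false] := by simp
    have e2 : o ++ [false, true] = (o ++ [false]) ++ [true] := by simp
    have hI : wordIdeal (l (σ y)) o = wordIdeal (l y) o := by
      apply wordIdeal_congr
      intro t ht
      have h1 : t < r := by omega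
      simp only [hl_def, h1, dif_pos]
      congr 1
      simp only [σ, LinearMap.funLeft_apply]
      rw [Equiv.swap_apply_of_ne_of_ne] <;> simp [i, i', Fin.ext_iff] <;> omega
    have hs1 : l (σ y) o.length = l y (o.length + 1) := by
      have h1 : o.length < r := by omega
      have h2 : o.length + 1 < r := by omega
      simp only [hl_def, h1, h2, dif_pos]
      congr 1
      simp only [σ, LinearMap.funLeft_apply]
      congr 1
      exact Equiv.swap_apply_left i i'
    have hs2 : l (σ y) (o.length + 1) = l y o.length := by
      have h1 : o.length < r := by omega
      have h2 : o.length + 1 < r := by omega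
      simp only [hl_def, h1, h2, dif_pos]
      congr 1
      simp only [σ, LinearMap.funLeft_apply]
      congr 1
      exact Equiv.swap_apply_right i i'
    rw [e1, e2, wordIdeal_false, wordIdeal_true, wordIdeal_true, wordIdeal_false]
    simp only [List.length_append, List.length_cons, List.length_nil, zero_add]
    rw [hI, hs1, hs2]
    apply sup_le
    · intro x hx
      rw [Ideal.mem_colon_span_singleton] at hx ⊢
      exact Ideal.mem_sup_left hx
    · rw [Ideal.span_singleton_le_iff_mem, Ideal.mem_colon_span_singleton]
      exact Ideal.mul_mem_right _ _ (Ideal.mem_sup_right (Ideal.mem_span_singleton_self _))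
  have hfin := List.finite_length_le Bool r
  have hall : ∀ᶠ y in genFilter K (Fin r → W), ∀ o ∈ {o : List Bool | o.length ≤ r},
      (o.length < r → ¬ 𝒜 1 ≤ Submodule.restrictScalars K (wordIdeal (l y) o) →
        l y o.length ∉ wordIdeal (l y) o) ∧
      (o.length + 2 ≤ r → 
        homDim 𝒜 (wordIdeal (l y) (o ++ [true, false])) (d - o.count true - 1) ≤
        homDim 𝒜 (wordIdeal (l y) (o ++ [false, true])) (d - o.count true - 1)) := by
    rw [Filter.eventually_all_finite hfin]
    intro o _
    refine Filter.Eventually.and ?_ ?_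
    · by_cases h : o.length < r
      · filter_upwards [hA o h] with y hy _ using hy
      · exact Filter.Eventually.of_forall fun y h' => absurd h' h
    · by_cases h : o.length + 2 ≤ r
      · filter_upwards [hB o h (d - o.count true - 1)] with y hy _ using hy
      · exact Filter.Eventually.of_forall fun y h' => absurd h' h
  filter_upwards [hall] with y hy
  have hP1 : ∀ o : List Bool, o.length < r →
      ¬ (HomogeneousIdeal.irrelevant 𝒜).toIdeal ≤ wordIdeal (l y) o →
      l y o.length ∉ wordIdeal (l y) o := fun o ho h =>
    (hy o (le_of_lt ho)).1 ho fun h' => h (irrelevant_le 𝒜 hstd _ h')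
  have hP2 : ∀ o : List Bool, o.length ≤ r →
      (HomogeneousIdeal.irrelevant 𝒜).toIdeal ≤ wordIdeal (l y) o ∨
      o.count false ≤ homDim 𝒜 (wordIdeal (l y) o) 1 := by
    intro o
    induction o using List.reverseRecOn with
    | nil => intro _; right; simp
    | append_singleton o a ih =>
      intro ho
      have ho' : o.length < r := by simpa using ho
      have hle : wordIdeal (l y) o ≤ wordIdeal (l y) (o ++ [a]) := by
        cases a
        · rw [wordIdeal_false]; exact le_sup_left
        · rw [wordIdeal_true]; exact Ideal.le_colon
      by_cases hm : (HomogeneousIdeal.irrelevant 𝒜).toIdeal ≤ wordIdeal (l y) o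
      · exact Or.inl (hm.trans hle)
      · right
        have h1 := (ih ho'.le).resolve_left hm
        cases a
        · have : homDim 𝒜 (wordIdeal (l y) o) 1 <
              homDim 𝒜 (wordIdeal (l y) (o ++ [false])) 1 := by
            apply homDim_lt 𝒜 hle 1 (hl1 y o.length) _ (hP1 o ho' hm)
            rw [wordIdeal_false]
            exact Ideal.mem_sup_right (Ideal.mem_span_singleton_self _)
          simp only [List.count_append, List.count_singleton_self]
          omega
        · have := homDim_mono 𝒜 hle 1
          simp
          omega
  intro o ho
  refine ⟨fun h h' => hP1 o h' h, fun h1 h2 => ?_, (hy o ho).2⟩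
  rcases hP2 o ho with h | h
  · exact h
  · apply irrelevant_le 𝒜 hstd
    apply le_of_homDim
    refine le_trans ?_ h
    have := List.count_true_add_count_false o
    omega

end Main

lemma veronese_span {R ι : Type*} [CommRing R] [Algebra K R] (𝒜 : ℕ → Submodule K R)
    [GradedAlgebra 𝒜] (h0 : 𝒜 0 = (1 : Submodule K R)) (g : MvPolynomial ι K →ₐ[K] R)
    (hsurj : Function.Surjective g) (hg1 : ∀ m, g (MvPolynomial.X m) ∈ 𝒜 1) :
    𝒜 1 ≤ Submodule.span K (Set.range fun m => g (MvPolynomial.X m)) := by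
  have key : ∀ p, (DirectSum.decompose 𝒜 (g p) 1 : R) ∈
      Submodule.span K (Set.range fun m => g (MvPolynomial.X m)) := by
    intro p
    induction p using MvPolynomial.induction_on with
    | C a =>
      have : g (MvPolynomial.C a) ∈ 𝒜 0 := by
        rw [h0, Submodule.mem_one]
        exact ⟨a, (AlgHom.commutes g a).symm⟩
      rw [DirectSum.decompose_of_mem_ne 𝒜 this (by omega)]
      exact zero_mem _
    | add p q hp hq =>
      rw [map_add, DirectSum.decompose_add]
      exact add_mem hp hq
    | mul_X p m _ =>
      rw [map_mul]
      have h1 := DirectSum.coe_decompose_mul_add_of_right_mem 𝒜 (i := 0) (a := g p) (hg1 m)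
      rw [zero_add] at h1
      rw [h1]
      have h2 : (DirectSum.decompose 𝒜 (g p) 0 : R) ∈ (1 : Submodule K R) := by
        rw [← h0]; exact SetLike.coe_mem _
      obtain ⟨a, ha⟩ := Submodule.mem_one.1 h2
      rw [← ha, ← Algebra.smul_def]
      exact Submodule.smul_mem _ _ (Submodule.subset_span ⟨m, rfl⟩)
  intro x hx
  obtain ⟨p, rfl⟩ := hsurj x
  have := key p
  rwa [DirectSum.decompose_of_mem_same 𝒜 hx] at this

lemma veronese_nondeg [CharZero K] (s b : ℕ) (c : Sym (Fin s) b → K)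
    (h : ∀ z : Fin s → K, ∑ m : Sym (Fin s) b,
      ((Nat.multinomial Finset.univ (fun j => Multiset.count j (m : Multiset (Fin s))) : K) *
        ∏ j : Fin s, z j ^ Multiset.count j (m : Multiset (Fin s))) * c m = 0) (m) : c m = 0 := by
  classical
  let e : Sym (Fin s) b → (Fin s →₀ ℕ) := fun m => Multiset.toFinsupp (m : Multiset (Fin s))
  have he : Function.Injective e := fun m m' h => by
    apply Subtype.ext
    exact Multiset.toFinsupp.injective h
  let a : Sym (Fin s) b → K := fun m =>
    (Nat.multinomial Finset.univ (fun j => Multiset.count j (m : Multiset (Fin s))) : K) * c m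
  let P : MvPolynomial (Fin s) K := ∑ m : Sym (Fin s) b, MvPolynomial.monomial (e m) (a m)
  have hP : P = 0 := by
    apply MvPolynomial.funext
    intro z
    rw [map_zero, ← h z]
    simp only [P, map_sum]
    refine Finset.sum_congr rfl fun m _ => ?_
    rw [MvPolynomial.eval_monomial, Finsupp.prod_fintype _ _ (by simp)]
    simp only [e, a, Multiset.toFinsupp_apply]
    ring
  have h1 : MvPolynomial.coeff (e m) P = a m := by
    simp only [P, MvPolynomial.coeff_sum, MvPolynomial.coeff_monomial]
    rw [Finset.sum_eq_single m]
    · simp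
    · intro m' _ hm'
      rw [if_neg fun h => hm' (he h)]
    · simp
  rw [hP, MvPolynomial.coeff_zero] at h1
  refine (mul_eq_zero.1 h1.symm).resolve_left ?_
  exact_mod_cast (Nat.multinomial_pos _ _).ne'

end Helpers

/-- **(Gr,d) for powers of general linear forms (Veronese case, char 0).** `R` is a
homomorphic image, by a graded surjection `g`, of the `b`-th Veronese ring
`S = K[X_1^{a_1}⋯X_s^{a_s} : ∑ a_i = b]` (presented as the quotient of the polynomial
ring on variables indexed by the degree-`b` monomials `Sym (Fin s) b`, by the kernel of
the evaluation `π` sending the variable `m` to the corresponding monomial), the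
generators going to degree-one elements of `R`.  With `n = dim_K R_1`, `d > 0` and
`r ≥ d + n - 1`, for general linear forms `l_1,…,l_r` of `K[X_1,…,X_s]`, encoded by
their coefficient tuples `y`, the `r` linear forms of `R` given by the images of
`l_t^b` — the multinomial expansion `∑ m, multinomial(m)·(∏ j, (y t j)^{m_j}) • g(X m)`
— satisfy property (Gr,d). -/
theorem veronese_powers_satisfy_Gr
    {K R : Type*} [Field K] [CharZero K] [CommRing R] [Algebra K R]
    (𝒜 : ℕ → Submodule K R) [GradedAlgebra 𝒜]
    (h0 : 𝒜 0 = (1 : Submodule K R)) (hstd : ∀ m, 𝒜 (m + 1) = 𝒜 1 * 𝒜 m)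
    [FiniteDimensional K (𝒜 1)]
    (s b : ℕ) (hb : 0 < b)
    (g : MvPolynomial (Sym (Fin s) b) K →ₐ[K] R)
    (hsurj : Function.Surjective g)
    (hker : RingHom.ker (MvPolynomial.aeval
        (fun m : Sym (Fin s) b =>
          ((m : Multiset (Fin s)).map
            (MvPolynomial.X : Fin s → MvPolynomial (Fin s) K)).prod) :
        MvPolynomial (Sym (Fin s) b) K →ₐ[K] MvPolynomial (Fin s) K) ≤ RingHom.ker g)
    (hg1 : ∀ m, g (MvPolynomial.X m) ∈ 𝒜 1)
    (d r : ℕ) (hd : 0 < d) (hr : Module.finrank K (𝒜 1) + d ≤ r + 1) :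
    ∃ U : Set (Fin r → Fin s → K), IsZOpen K U ∧ U.Nonempty ∧
      ∀ y ∈ U, GrProp 𝒜
        (fun t => if h : t < r then
            ∑ m : Sym (Fin s) b,
              (((Nat.multinomial Finset.univ
                  (fun j => Multiset.count j (m : Multiset (Fin s)))) : K) *
                ∏ j : Fin s, y ⟨t, h⟩ j ^ Multiset.count j (m : Multiset (Fin s))) •
                g (MvPolynomial.X m)
          else 0) r d := by
  classical
  set φ : (Fin s → K) → R := fun z => ∑ m : Sym (Fin s) b,
    (((Nat.multinomial Finset.univ
        (fun j => Multiset.count j (m : Multiset (Fin s)))) : K) *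
      ∏ j : Fin s, z j ^ Multiset.count j (m : Multiset (Fin s))) •
      g (MvPolynomial.X m) with hφ
  have hPM : PM (K := K) φ := by
    apply PM.sum
    intro m
    apply PM.smul
    have hco : ∀ j : Fin s, (fun z : Fin s → K => z j) ∈ polyFuns K (Fin s → K) := fun j =>
      Algebra.subset_adjoin ⟨LinearMap.proj j, rfl⟩
    have h2 : (algebraMap K ((Fin s → K) → K) (Nat.multinomial Finset.univ
        (fun j => Multiset.count j (m : Multiset (Fin s))) : K)) *
        ∏ j : Fin s, (fun z : Fin s → K => z j) ^ Multiset.count j (m : Multiset (Fin s)) ∈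
        polyFuns K (Fin s → K) :=
      mul_mem ((polyFuns K (Fin s → K)).algebraMap_mem _)
        (prod_mem fun j _ => pow_mem (hco j) _)
    convert h2 using 1
    ext z
    simp
  have hφ1 : ∀ z, φ z ∈ 𝒜 1 := fun z =>
    sum_mem fun m _ => Submodule.smul_mem _ _ (hg1 m)
  have hφn : ∀ ψ : R →ₗ[K] K, (∀ z, ψ (φ z) = 0) → ∀ x ∈ 𝒜 1, ψ x = 0 := by
    intro ψ hψ x hx
    have h1 := veronese_nondeg s b (fun m => ψ (g (MvPolynomial.X m))) (by
      intro z
      rw [← hψ z, hφ]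
      simp [map_sum])
    have h2 : Submodule.span K (Set.range fun m => g (MvPolynomial.X m)) ≤ LinearMap.ker ψ := by
      rw [Submodule.span_le]
      rintro _ ⟨m, rfl⟩
      exact h1 m
    exact h2 (veronese_span 𝒜 h0 g hsurj hg1 hx)
  obtain ⟨f, hf, ⟨y0, hy0⟩, hfy⟩ := mem_genFilter.1
    (gen_Gr_aux 𝒜 h0 hstd φ hPM hφ1 hφn d r hr)
  refine ⟨{y | f y ≠ 0}, ⟨{f}, ?_, ?_⟩, ⟨y0, hy0⟩, fun y hy => hfy y hy⟩
  · rintro _ rfl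
    exact hf
  · ext y
    simp
end

section
/- Let R be a standard graded algebra over a field K, let d > 0 be a degree, and let l_1,…,l_r be linear forms of R satisfying property (Gr,d). Then for every word o = o_1,…,o_i with 0 ≤ i < r and with j := |o|_c < d, setting I := I_{l,o}, one has dim_K (R/(I + (l_{i+1})))_{d−j} ≤ (dim_K (R/I)_{d−j})_{⟨d−j⟩}. -/
namespace HypRes

/-- The value of `macaulayDown` from one step of the Macaulay representation. -/
lemma md_step (e k a' : ℕ) (h : a' < Nat.choose k e) :
    macaulayDown (Nat.choose k (e + 1) + a') (e + 1) =
      Nat.choose (k - 1) (e + 1) + macaulayDown a' e := by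
  have hfg : Nat.findGreatest (fun m => Nat.choose m (e + 1) ≤ Nat.choose k (e + 1) + a')
      (Nat.choose k (e + 1) + a' + e + 1) = k := by
    rw [Nat.findGreatest_eq_iff]
    refine ⟨?_, fun _ => Nat.le_add_right _ _, ?_⟩
    · by_contra! hlt
      have hke : e + 1 ≤ k := by omega
      obtain ⟨t, rfl⟩ := Nat.exists_eq_add_of_le hke
      have h1 : t + 1 ≤ Nat.choose (e + 1 + t) (e + 1) := by
        clear h hlt hke
        induction t with
        | zero => simp
        | succ t ih =>
          have := Nat.choose_succ_succ (e + 1 + t) e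
          have h3 : 0 < Nat.choose (e + 1 + t) e := Nat.choose_pos (by omega)
          rw [← add_assoc]
          simp only [Nat.succ_eq_add_one] at this
          omega
      omega
    · intro n hn _ hle
      have h1 : Nat.choose (k + 1) (e + 1) ≤ Nat.choose n (e + 1) :=
        Nat.choose_le_choose _ hn
      have h2 := Nat.choose_succ_succ k e
      simp only [Nat.succ_eq_add_one] at h2
      omega
  rw [macaulayDown]
  simp only [hfg]
  congr 2
  omega

lemma md_rep (e a : ℕ) : ∃ k a', e ≤ k ∧ a' < Nat.choose k e ∧
    a = Nat.choose k (e + 1) + a' := by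
  induction a with
  | zero => exact ⟨e, 0, le_rfl, by simp, by simp⟩
  | succ a ih =>
    obtain ⟨k, a', hk, ha', rfl⟩ := ih
    by_cases h : a' + 1 < Nat.choose k e
    · exact ⟨k, a' + 1, hk, h, by omega⟩
    · refine ⟨k + 1, 0, by omega, Nat.choose_pos (by omega), ?_⟩
      have h2 := Nat.choose_succ_succ k e
      simp only [Nat.succ_eq_add_one] at h2
      omega

lemma md_zero (e : ℕ) : macaulayDown 0 e = 0 := by
  induction e with
  | zero => rfl
  | succ e ih =>
    have := md_step e e 0 (by simp)
    rw [ih] at this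
    simp at this
    rw [this]
    exact Nat.choose_eq_zero_of_lt (by omega)

lemma md_choose (e k : ℕ) (h : e ≤ k) :
    macaulayDown (Nat.choose k (e + 1)) (e + 1) = Nat.choose (k - 1) (e + 1) := by
  have := md_step e k 0 (Nat.choose_pos h)
  simpa [md_zero] using this

lemma md_one (a : ℕ) : macaulayDown a 1 = a - 1 := by
  have := md_choose 0 a (by omega)
  simpa using this

/-- `c ↦ c_⟨d⟩` grows by `0` or `1` at every step. -/
lemma md_succ (e : ℕ) : ∀ a, macaulayDown a (e + 1) ≤ macaulayDown (a + 1) (e + 1) ∧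
    macaulayDown (a + 1) (e + 1) ≤ macaulayDown a (e + 1) + 1 := by
  induction e with
  | zero => intro a; simp only [zero_add, md_one]; omega
  | succ e ih =>
    intro a
    obtain ⟨k, a', hk, ha', rfl⟩ := md_rep (e + 1) a
    have h := ih a'
    by_cases hc : a' + 1 < Nat.choose k (e + 1)
    · rw [add_assoc (Nat.choose k (e + 1 + 1)), md_step _ _ _ hc, md_step _ _ _ ha']
      omega
    · have hc' : a' + 1 = Nat.choose k (e + 1) := by omega
      rw [hc', md_choose e k (by omega)] at h
      have h2 := Nat.choose_succ_succ k (e + 1)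
      simp only [Nat.succ_eq_add_one] at h2
      have h3 : Nat.choose k (e + 1 + 1) + a' + 1 = Nat.choose (k + 1) (e + 1 + 1) := by omega
      rw [h3, md_choose _ _ (by omega), md_step _ _ _ ha']
      obtain ⟨k, rfl⟩ : ∃ m, k = m + 1 := ⟨k - 1, by omega⟩
      have h4 := Nat.choose_succ_succ k (e + 1)
      simp only [Nat.succ_eq_add_one, Nat.add_sub_cancel] at h4 h ⊢
      omega

lemma md_mono (e : ℕ) {a b : ℕ} (h : a ≤ b) :
    macaulayDown a (e + 1) ≤ macaulayDown b (e + 1) :=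
  monotone_nat_of_le_succ (fun n => (md_succ e n).1) h

lemma md_lip (e : ℕ) {a b : ℕ} (h : a ≤ b) :
    macaulayDown b (e + 1) + a ≤ macaulayDown a (e + 1) + b := by
  induction b, h using Nat.le_induction with
  | base => omega
  | succ b _ ih => have := (md_succ e b).2; omega

lemma md_one_left (e : ℕ) : macaulayDown 1 (e + 1) = 0 := by
  have := md_choose e (e + 1) (by omega)
  simpa using this

lemma md_lt (e a : ℕ) (h : 1 ≤ a) : macaulayDown a (e + 1) + 1 ≤ a := by
  have := md_lip e h
  rw [md_one_left] at this
  omega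

/-- The numerical heart of Green's theorem. -/
lemma md_key (e : ℕ) : ∀ a, 1 ≤ a →
    macaulayDown (a - macaulayDown a (e + 1) - 1) e + 1 +
      macaulayDown (macaulayDown a (e + 1) + 1) (e + 1) ≤ macaulayDown a (e + 1) + 1 := by
  induction e with
  | zero =>
    intro a ha
    have hz : ∀ x, macaulayDown x 0 = 0 := fun x => rfl
    simp only [zero_add, md_one, hz]
    omega
  | succ e ih =>
    intro a ha
    obtain ⟨k, a', hk, ha', rfl⟩ := md_rep (e + 1) a
    rw [md_step _ _ _ ha']
    have hk2 : e + 2 ≤ k := by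
      by_contra! hlt
      obtain rfl : k = e + 1 := by omega
      simp at ha' ha
      omega
    obtain ⟨k, rfl⟩ : ∃ m, k = m + 2 := ⟨k - 2, by omega⟩
    have p1 := Nat.choose_succ_succ (k + 1) (e + 1)
    have p2 := Nat.choose_succ_succ k (e + 1)
    have p3 := Nat.choose_succ_succ k e
    have p4 := Nat.choose_succ_succ (k + 1) e
    have hmc := md_choose e (k + 2) (by omega)
    have hmc1 := md_choose e (k + 1) (by omega)
    have hmc2 := md_choose (e + 1) (k + 2) (by omega)
    simp only [Nat.succ_eq_add_one, Nat.add_sub_cancel,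
      show k + 1 + 1 = k + 2 from rfl, show e + 1 + 1 = e + 2 from rfl,
      show k + 2 - 1 = k + 1 from rfl] at *
    rcases Nat.eq_zero_or_pos a' with rfl | ha1
    · simp only [md_zero, add_zero]
      have hx : Nat.choose (k + 2) (e + 2) - Nat.choose (k + 1) (e + 2) - 1 ≤
          Nat.choose (k + 1) (e + 1) := by omega
      have hx' := md_mono e hx
      rw [hmc1] at hx'
      by_cases hc : 1 < Nat.choose (k + 1) (e + 1)
      · have := md_step (e + 1) (k + 1) 1 hc
        rw [md_one_left] at this
        simp only [Nat.add_sub_cancel, show e + 1 + 1 = e + 2 from rfl] at this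
        omega
      · have hke : k = e := by
          by_contra hne
          have h1 : 0 < Nat.choose k e := Nat.choose_pos (by omega)
          have h2 : 0 < Nat.choose k (e + 1) := Nat.choose_pos (by omega)
          omega
        subst hke
        simp only [Nat.choose_succ_self, Nat.choose_self] at *
        have := md_one_left (k + 1)
        simp only [show k + 1 + 1 = k + 2 from rfl, zero_add] at *
        omega
    · have hI := ih a' ha1
      have hlt := md_lt e a' ha1
      have hm := md_mono e ha'.le
      have hl := md_lip e ha'.le
      rw [hmc] at hm hl
      have hs := md_step e (k + 1) (a' - macaulayDown a' (e + 1) - 1) (by omega)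
      have hL : Nat.choose (k + 2) (e + 2) + a' -
          (Nat.choose (k + 1) (e + 2) + macaulayDown a' (e + 1)) - 1 =
          Nat.choose (k + 1) (e + 1) + (a' - macaulayDown a' (e + 1) - 1) := by omega
      rw [hL, hs]
      simp only [Nat.add_sub_cancel]
      rcases lt_trichotomy (macaulayDown a' (e + 1) + 1) (Nat.choose (k + 1) (e + 1))
        with hc | hc | hc
      · have := md_step (e + 1) (k + 1) _ hc
        simp only [Nat.add_sub_cancel, show e + 1 + 1 = e + 2 from rfl] at this
        rw [add_assoc (Nat.choose (k + 1) (e + 2)), this]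
        omega
      · rw [hc, hmc1] at hI
        rw [add_assoc (Nat.choose (k + 1) (e + 2)), hc, add_comm (Nat.choose (k + 1) (e + 2)),
          ← p1, hmc2]
        omega
      · have hc' : macaulayDown a' (e + 1) = Nat.choose (k + 1) (e + 1) := by omega
        have hq : 1 < Nat.choose (k + 2) (e + 1) := by
          have h1 : 0 < Nat.choose (k + 1) e := Nat.choose_pos (by omega)
          have h2 : 0 < Nat.choose (k + 1) (e + 1) := Nat.choose_pos (by omega)
          omega
        have := md_step (e + 1) (k + 2) 1 hq
        rw [md_one_left] at this
        simp only [show k + 2 - 1 = k + 1 from rfl, show e + 1 + 1 = e + 2 from rfl] at this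
        have hmm := md_mono e (Nat.le_succ (Nat.choose (k + 1) (e + 1)))
        simp only [Nat.succ_eq_add_one] at hmm
        rw [hmc1] at hmm
        rw [hc'] at hI ⊢
        have hq2 : Nat.choose (k + 1) (e + 2) + Nat.choose (k + 1) (e + 1) + 1 =
          Nat.choose (k + 2) (e + 2) + 1 := by omega
        rw [hq2, this]
        omega

lemma md_green (e a b : ℕ) (hab : b ≤ a)
    (h : b ≤ macaulayDown (a - b) (e + 1) + macaulayDown b (e + 2)) :
    b ≤ macaulayDown a (e + 2) := by
  by_contra! hlt
  have hk := md_key (e + 1) a (by omega)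
  have hl := md_lip (e + 1) (show macaulayDown a (e + 1 + 1) + 1 ≤ b from hlt)
  have hm := md_mono e (show a - b ≤ a - macaulayDown a (e + 1 + 1) - 1 by
    simp only [show e + 1 + 1 = e + 2 from rfl]; omega)
  simp only [show e + 1 + 1 = e + 2 from rfl] at *
  omega

section LinAlg

lemma finrank_aux {K V W : Type*} [Field K] [AddCommGroup V] [Module K V] [AddCommGroup W]
    [Module K W] [FiniteDimensional K V] [FiniteDimensional K W] (φ : V →ₗ[K] W)
    (P : Submodule K W) :
    Module.finrank K (W ⧸ (P ⊔ LinearMap.range φ)) + Module.finrank K (V ⧸ P.comap φ) =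
      Module.finrank K (W ⧸ P) := by
  have hker : LinearMap.ker (P.mkQ ∘ₗ φ) = P.comap φ := by
    rw [LinearMap.ker_comp, Submodule.ker_mkQ]
  have hr : LinearMap.range (P.mkQ ∘ₗ φ) = (LinearMap.range φ).map P.mkQ := by
    rw [LinearMap.range_comp]
  rw [← hker, (LinearMap.quotKerEquivRange (P.mkQ ∘ₗ φ)).finrank_eq, hr,
    ← (Submodule.quotientQuotientEquivQuotientSup P (LinearMap.range φ)).finrank_eq]
  exact Submodule.finrank_quotient_add_finrank _

variable {K R : Type*} [Field K] [CommRing R] [Algebra K R] (𝒜 : ℕ → Submodule K R)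

lemma fd (h0 : 𝒜 0 = (1 : Submodule K R)) (hstd : ∀ n, 𝒜 (n + 1) = 𝒜 1 * 𝒜 n)
    [FiniteDimensional K (𝒜 1)] (n : ℕ) : FiniteDimensional K (𝒜 n) := by
  rw [← Submodule.fg_iff_finiteDimensional]
  induction n with
  | zero => rw [h0]; exact (Submodule.one_eq_span (R := K) (A := R)) ▸ Submodule.fg_span_singleton _
  | succ n ih =>
    rw [hstd]
    exact Submodule.FG.mul ((Submodule.fg_iff_finiteDimensional _).2 inferInstance) ih

lemma mem_colon_span (I : Ideal R) (x y : R) :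
    x ∈ I.colon (Ideal.span {y} : Ideal R) ↔ x * y ∈ I := by
  rw [Submodule.mem_colon]
  constructor
  · intro h
    exact h y (Ideal.mem_span_singleton_self y)
  · intro h s hs
    obtain ⟨c, rfl⟩ := Ideal.mem_span_singleton'.1 hs
    have := I.mul_mem_left c h
    rw [smul_eq_mul]
    convert this using 1
    ring

variable [GradedAlgebra 𝒜]

lemma colon_hom {I : Ideal R} (hI : I.IsHomogeneous 𝒜) {y : R} (hy : y ∈ 𝒜 1) :
    (I.colon (Ideal.span {y} : Ideal R) : Ideal R).IsHomogeneous 𝒜 := by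
  intro i x hx
  rw [mem_colon_span] at hx ⊢
  have := hI (i + 1) hx
  rwa [DirectSum.coe_decompose_mul_add_of_right_mem 𝒜 hy] at this

lemma sum_hom {I : Ideal R} (hI : I.IsHomogeneous 𝒜) {y : R} (hy : y ∈ 𝒜 1) :
    (I ⊔ Ideal.span {y} : Ideal R).IsHomogeneous 𝒜 := by
  refine hI.sup (Ideal.homogeneous_span 𝒜 _ ?_)
  rintro x rfl
  exact ⟨1, hy⟩

lemma aux_append (l : ℕ → R) (o : List Bool) (b : Bool) : ∀ (j : ℕ) (I : Ideal R),
    wordIdealAux l j I (o ++ [b]) =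
      if b then (wordIdealAux l j I o).colon (Ideal.span {l (j + o.length)} : Ideal R)
      else wordIdealAux l j I o ⊔ Ideal.span {l (j + o.length)} := by
  induction o with
  | nil => intro j I; simp [wordIdealAux]
  | cons a o ih =>
    intro j I
    simp only [List.cons_append, wordIdealAux, List.length_cons]
    rw [ih, show j + 1 + o.length = j + (o.length + 1) by omega]

lemma word_c (l : ℕ → R) (o : List Bool) :
    wordIdeal l (o ++ [true]) =
      (wordIdeal l o).colon (Ideal.span {l o.length} : Ideal R) := by
  simp [wordIdeal, aux_append]

lemma word_s (l : ℕ → R) (o : List Bool) :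
    wordIdeal l (o ++ [false]) = wordIdeal l o ⊔ Ideal.span {l o.length} := by
  simp [wordIdeal, aux_append]

lemma word_hom (l : ℕ → R) (r : ℕ) (hl : ∀ j < r, l j ∈ 𝒜 1) (o : List Bool)
    (ho : o.length ≤ r) : (wordIdeal l o).IsHomogeneous 𝒜 := by
  induction o using List.reverseRecOn with
  | nil => exact Ideal.IsHomogeneous.bot 𝒜
  | append_singleton o b ih =>
    simp only [List.length_append, List.length_singleton] at ho
    have := ih (by omega)
    cases b
    · rw [word_s]; exact sum_hom 𝒜 this (hl _ (by omega))
    · rw [word_c]; exact colon_hom 𝒜 this (hl _ (by omega))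

/-- Multiplication by a linear form. -/
def mulMap {y : R} (hy : y ∈ 𝒜 1) (n : ℕ) : 𝒜 n →ₗ[K] 𝒜 (n + 1) :=
  ((LinearMap.mulRight K y).comp (𝒜 n).subtype).codRestrict (𝒜 (n + 1))
    (fun x => SetLike.mul_mem_graded x.2 hy)

lemma dim_exact (h0 : 𝒜 0 = (1 : Submodule K R)) (hstd : ∀ n, 𝒜 (n + 1) = 𝒜 1 * 𝒜 n)
    [FiniteDimensional K (𝒜 1)] {I : Ideal R} (hI : I.IsHomogeneous 𝒜) {y : R}
    (hy : y ∈ 𝒜 1) (n : ℕ) :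
    quotDim 𝒜 (I ⊔ Ideal.span {y}) (n + 1) +
      quotDim 𝒜 (I.colon (Ideal.span {y} : Ideal R)) n = quotDim 𝒜 I (n + 1) := by
  have := fd 𝒜 h0 hstd n
  have := fd 𝒜 h0 hstd (n + 1)
  have h := finrank_aux (mulMap 𝒜 hy n) (homComp 𝒜 I (n + 1))
  have e1 : homComp 𝒜 (I ⊔ Ideal.span {y}) (n + 1) =
      homComp 𝒜 I (n + 1) ⊔ LinearMap.range (mulMap 𝒜 hy n) := by
    apply le_antisymm
    · rintro ⟨x, hx⟩ hmem
      have hmem' : x ∈ I ⊔ Ideal.span {y} := hmem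
      obtain ⟨i, hi, z, hz, hsum⟩ := Submodule.mem_sup.1 hmem'
      obtain ⟨c, rfl⟩ := Ideal.mem_span_singleton'.1 hz
      rw [Submodule.mem_sup]
      refine ⟨DirectSum.decompose 𝒜 i (n + 1), hI (n + 1) hi,
        mulMap 𝒜 hy n (DirectSum.decompose 𝒜 c n), ⟨_, rfl⟩, ?_⟩
      apply Subtype.ext
      have h1 : ((DirectSum.decompose 𝒜 x (n + 1) : 𝒜 (n + 1)) : R) = x :=
        DirectSum.decompose_of_mem_same 𝒜 hx
      rw [← hsum, DirectSum.decompose_add] at h1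
      simp only [DirectSum.add_apply, Submodule.coe_add] at h1
      rw [DirectSum.coe_decompose_mul_add_of_right_mem 𝒜 hy] at h1
      exact h1.trans hsum
    · apply sup_le
      · intro x hx
        exact (le_sup_left : I ≤ I ⊔ Ideal.span {y}) hx
      · rintro _ ⟨x, rfl⟩
        exact (le_sup_right : _ ≤ I ⊔ Ideal.span {y})
          (Ideal.mul_mem_left _ (x : R) (Ideal.mem_span_singleton_self y))
  have e2 : homComp 𝒜 (I.colon (Ideal.span {y} : Ideal R)) n =
      (homComp 𝒜 I (n + 1)).comap (mulMap 𝒜 hy n) := by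
    ext x
    exact mem_colon_span I x y
  unfold quotDim
  rw [e1, e2]
  exact h

lemma dim_add (h0 : 𝒜 0 = (1 : Submodule K R)) (hstd : ∀ n, 𝒜 (n + 1) = 𝒜 1 * 𝒜 n)
    [FiniteDimensional K (𝒜 1)] (I : Ideal R) (n : ℕ) :
    quotDim 𝒜 I n + homDim 𝒜 I n = Module.finrank K (𝒜 n) := by
  have := fd 𝒜 h0 hstd n
  exact Submodule.finrank_quotient_add_finrank _

lemma quot_zero {I : Ideal R} (h : (HomogeneousIdeal.irrelevant 𝒜).toIdeal ≤ I) (n : ℕ) :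
    quotDim 𝒜 I (n + 1) = 0 := by
  have : homComp 𝒜 I (n + 1) = ⊤ := by
    rw [eq_top_iff]
    rintro ⟨x, hx⟩ -
    apply h
    change x ∈ HomogeneousIdeal.irrelevant 𝒜
    rw [HomogeneousIdeal.mem_irrelevant_iff, GradedRing.proj_apply]
    exact DirectSum.decompose_of_mem_ne 𝒜 hx (by omega)
  unfold quotDim
  rw [this, Module.finrank_eq_zero_iff_of_free, Submodule.Quotient.subsingleton_iff]

lemma quot_pos (h0 : 𝒜 0 = (1 : Submodule K R)) (hstd : ∀ n, 𝒜 (n + 1) = 𝒜 1 * 𝒜 n)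
    [FiniteDimensional K (𝒜 1)] {I : Ideal R} {y : R} (hy : y ∉ I) :
    1 ≤ quotDim 𝒜 (I.colon (Ideal.span {y} : Ideal R)) 0 := by
  have := fd 𝒜 h0 hstd 0
  by_contra! hlt
  have hz : Module.finrank K (𝒜 0 ⧸ homComp 𝒜 (I.colon (Ideal.span {y} : Ideal R)) 0) = 0 := by
    unfold quotDim at hlt
    omega
  rw [Module.finrank_eq_zero_iff_of_free, Submodule.Quotient.subsingleton_iff] at hz
  have h1 : (⟨1, SetLike.one_mem_graded 𝒜⟩ : 𝒜 0) ∈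
      homComp 𝒜 (I.colon (Ideal.span {y} : Ideal R)) 0 := by rw [hz]; trivial
  have h2 : (1 : R) ∈ I.colon (Ideal.span {y} : Ideal R) := h1
  rw [mem_colon_span, one_mul] at h2
  exact hy h2

end LinAlg

end HypRes

/-- **The Claim in the proof of the hyperplane restriction theorem.**  If the linear
forms `l 0, …, l (r-1)` of a standard graded algebra `R` satisfy property (Gr,d), then
for every word `o` of length `i < r` with `j := |o|_c < d`, setting `I := I_{l,o}`,
`dim_K (R/(I + (l_{i+1})))_{d-j} ≤ (dim_K (R/I)_{d-j})_⟨d-j⟩`. -/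
theorem claim_of_hyperplane_restriction
    {K R : Type*} [Field K] [CommRing R] [Algebra K R]
    (𝒜 : ℕ → Submodule K R) [GradedAlgebra 𝒜]
    (h0 : 𝒜 0 = (1 : Submodule K R)) (hstd : ∀ n, 𝒜 (n + 1) = 𝒜 1 * 𝒜 n)
    [FiniteDimensional K (𝒜 1)] (d r : ℕ) (hd : 0 < d)
    (l : ℕ → R) (hl : ∀ j < r, l j ∈ 𝒜 1)
    (hGr : GrProp 𝒜 l r d) :
    ∀ o : List Bool, o.length < r → o.count true < d →
      quotDim 𝒜 (wordIdeal l o ⊔ Ideal.span {l o.length}) (d - o.count true) ≤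
        macaulayDown (quotDim 𝒜 (wordIdeal l o) (d - o.count true)) (d - o.count true) := by
  intro o
  induction hn : r - o.length generalizing o with
  | zero => intro h; omega
  | succ n ih =>
    intro ho hc
    have hhom := HypRes.word_hom 𝒜 l r hl o ho.le
    obtain ⟨e, he⟩ : ∃ e, d - o.count true = e + 1 := ⟨d - o.count true - 1, by omega⟩
    rw [he]
    have hex := HypRes.dim_exact 𝒜 h0 hstd hhom (hl _ ho) e
    by_cases hlast : o.length + 1 = r
    · have h2 := (hGr (o ++ [false]) (by simp; omega)).2.1 (by simp; omega) (by simpa using hc)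
      rw [HypRes.word_s] at h2
      rw [HypRes.quot_zero 𝒜 h2]
      exact Nat.zero_le _
    · rcases e with _ | e
      · rw [HypRes.md_one]
        by_cases hm : (HomogeneousIdeal.irrelevant 𝒜).toIdeal ≤ wordIdeal l o
        · have := HypRes.quot_zero 𝒜 hm 0
          omega
        · have h1 := (hGr o ho.le).1 hm ho
          have := HypRes.quot_pos 𝒜 h0 hstd h1
          omega
      · have h3 := (hGr o ho.le).2.2 (by omega)
        have hS := ih (o ++ [false]) (by simp; omega) (by simp; omega) (by simpa using hc)
        have hC := ih (o ++ [true]) (by simp; omega) (by simp; omega) (by simp; omega)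
        have hhomS := HypRes.word_hom 𝒜 l r hl (o ++ [false]) (by simp; omega)
        have hexS := HypRes.dim_exact 𝒜 h0 hstd hhomS
          (hl (o ++ [false]).length (by simp; omega)) (e + 1)
        rw [show o ++ [true, false] = (o ++ [true]) ++ [false] by simp,
          show o ++ [false, true] = (o ++ [false]) ++ [true] by simp, HypRes.word_s l (o ++ [true]),
          HypRes.word_c l (o ++ [false]), show d - o.count true - 1 = e + 1 by omega] at h3
        have hcS : d - (o ++ [false]).count true = e + 2 := by simp; omega
        have hcC : d - (o ++ [true]).count true = e + 1 := by simp; omega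
        rw [hcS] at hS
        rw [hcC] at hC
        have a1 := HypRes.dim_add 𝒜 h0 hstd
          (wordIdeal l (o ++ [true]) ⊔ Ideal.span {l (o ++ [true]).length}) (e + 1)
        have a2 := HypRes.dim_add 𝒜 h0 hstd
          ((wordIdeal l (o ++ [false])).colon
            (Ideal.span {l (o ++ [false]).length} : Ideal R)) (e + 1)
        apply HypRes.md_green e _ _ (by omega)
        have hsub : quotDim 𝒜 (wordIdeal l o) (e + 1 + 1) -
            quotDim 𝒜 (wordIdeal l o ⊔ Ideal.span {l o.length}) (e + 1 + 1) =
            quotDim 𝒜 (wordIdeal l (o ++ [true])) (e + 1) := by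
          rw [HypRes.word_c]; omega
        rw [hsub, ← HypRes.word_s]
        simp only [show e + 1 + 1 = e + 2 from rfl] at *
        omega
end

section
/- Let d̄ ≥ 2 be an integer and let c ≥ c_H ≥ 0 be non-negative integers. If c_H ≤ (c_H)_{⟨d̄⟩} + (c − c_H)_{⟨d̄−1⟩}, then c_H ≤ c_{⟨d̄⟩}. -/
theorem mdAux_sub_le_choose (e k : ℕ) : k ≤ Nat.choose k (e + 1) + e := by
  induction k with
  | zero => omega
  | succ k ih =>
    rw [Nat.choose_succ_succ, Nat.succ_eq_add_one]
    by_cases hk : e ≤ k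
    · have := Nat.choose_pos hk
      omega
    · omega

theorem mdAux_eq (e c k : ℕ) (h1 : Nat.choose k (e + 1) ≤ c)
    (h2 : c < Nat.choose (k + 1) (e + 1)) :
    macaulayDown c (e + 1) =
      Nat.choose (k - 1) (e + 1) + macaulayDown (c - Nat.choose k (e + 1)) e := by
  have hk : Nat.findGreatest (fun k => Nat.choose k (e + 1) ≤ c) (c + e + 1) = k := by
    rw [Nat.findGreatest_eq_iff]
    refine ⟨?_, fun _ => h1, ?_⟩
    · have := mdAux_sub_le_choose e k
      omega
    · intro n hn _ hc
      have : Nat.choose (k + 1) (e + 1) ≤ Nat.choose n (e + 1) := Nat.choose_le_choose _ hn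
      omega
  rw [macaulayDown]
  simp only [hk]

theorem mdAux_exists (e c : ℕ) : ∃ k, e ≤ k ∧ Nat.choose k (e + 1) ≤ c ∧
    c < Nat.choose (k + 1) (e + 1) := by
  induction c with
  | zero => exact ⟨e, le_rfl, by simp, by simp⟩
  | succ c ih =>
    obtain ⟨k, hk, h1, h2⟩ := ih
    by_cases h : c + 1 < Nat.choose (k + 1) (e + 1)
    · exact ⟨k, hk, by omega, h⟩
    · refine ⟨k + 1, by omega, by omega, ?_⟩
      have h3 := Nat.choose_succ_succ (k + 1) e
      have h4 : 0 < Nat.choose (k + 1) e := Nat.choose_pos (by omega)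
      simp only [Nat.succ_eq_add_one] at h3
      omega

theorem mdAux_zero (e : ℕ) : macaulayDown 0 e = 0 := by
  induction e with
  | zero => rw [macaulayDown]
  | succ e ih =>
    rw [mdAux_eq e 0 e (by simp) (by simp)]
    have : Nat.choose (e - 1) (e + 1) = 0 := Nat.choose_eq_zero_of_lt (by omega)
    simp [ih, this]

theorem mdAux_choose (e k : ℕ) (hk : e ≤ k) :
    macaulayDown (Nat.choose k (e + 1)) (e + 1) = Nat.choose (k - 1) (e + 1) := by
  have h3 := Nat.choose_succ_succ k e
  have h4 : 0 < Nat.choose k e := Nat.choose_pos hk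
  simp only [Nat.succ_eq_add_one] at h3
  rw [mdAux_eq e _ k le_rfl (by omega)]
  simp [mdAux_zero]

theorem mdAux_choose_pred (e k : ℕ) :
    macaulayDown (Nat.choose k e - 1) e = Nat.choose (k - 1) e - 1 := by
  induction e generalizing k with
  | zero => simp [macaulayDown]
  | succ e ih =>
    by_cases hk : k < e + 1
    · rw [Nat.choose_eq_zero_of_lt hk, Nat.choose_eq_zero_of_lt (by omega)]
      exact mdAux_zero _
    · obtain ⟨k, rfl⟩ : ∃ j, k = j + 1 := ⟨k - 1, by omega⟩
      have h3 := Nat.choose_succ_succ k e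
      have h4 : 0 < Nat.choose k e := Nat.choose_pos (by omega)
      simp only [Nat.succ_eq_add_one] at h3
      rw [mdAux_eq e _ k (by omega) (by omega)]
      have : Nat.choose (k + 1) (e + 1) - 1 - Nat.choose k (e + 1) = Nat.choose k e - 1 := by
        omega
      rw [this, ih]
      simp only [Nat.add_sub_cancel]
      rcases k with _ | k
      · have : e = 0 := by omega
        subst this; simp
      · have h5 := Nat.choose_succ_succ k e
        simp only [Nat.succ_eq_add_one] at h5
        simp only [Nat.add_sub_cancel]
        by_cases h6 : k < e
        · have := Nat.choose_eq_zero_of_lt h6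
          have := Nat.choose_eq_zero_of_lt (show k < e + 1 by omega)
          omega
        · have : 0 < Nat.choose k e := Nat.choose_pos (by omega)
          omega

theorem mdAux_step (e c : ℕ) : macaulayDown c e ≤ macaulayDown (c + 1) e ∧
    macaulayDown (c + 1) e ≤ macaulayDown c e + 1 := by
  induction e generalizing c with
  | zero => simp [macaulayDown]
  | succ e ih =>
    obtain ⟨k, hk, h1, h2⟩ := mdAux_exists e c
    rw [mdAux_eq e c k h1 h2]
    by_cases h : c + 1 < Nat.choose (k + 1) (e + 1)
    · rw [mdAux_eq e (c + 1) k (by omega) h]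
      have := ih (c - Nat.choose k (e + 1))
      rw [show c + 1 - Nat.choose k (e + 1) = c - Nat.choose k (e + 1) + 1 by omega]
      omega
    · have hc : c + 1 = Nat.choose (k + 1) (e + 1) := by omega
      have h3 := Nat.choose_succ_succ k e
      simp only [Nat.succ_eq_add_one] at h3
      rw [hc, mdAux_choose e (k + 1) (by omega)]
      rw [show c - Nat.choose k (e + 1) = Nat.choose k e - 1 by omega, mdAux_choose_pred]
      simp only [Nat.add_sub_cancel]
      rcases k with _ | k
      · have h0 : e = 0 := by omega
        subst h0; simp
      · have h5 := Nat.choose_succ_succ k e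
        simp only [Nat.succ_eq_add_one] at h5
        simp only [Nat.add_sub_cancel]
        omega

theorem mdAux_mono (e a b : ℕ) (h : a ≤ b) : macaulayDown a e ≤ macaulayDown b e ∧
    macaulayDown b e ≤ macaulayDown a e + (b - a) := by
  induction b, h using Nat.le_induction with
  | base => simp
  | succ b hb ih =>
    have := mdAux_step e b
    omega

theorem mdAux_one (e : ℕ) : macaulayDown 1 (e + 1) = 0 := by
  have := mdAux_choose e (e + 1) (by omega)
  simpa using this

theorem mdAux_lt (e c : ℕ) (hc : 1 ≤ c) : macaulayDown c (e + 1) + 1 ≤ c := by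
  have := mdAux_mono (e + 1) 1 c hc
  have := mdAux_one e
  omega

theorem mdAux_main (n c : ℕ) (hc : 1 ≤ c) :
    macaulayDown (c - macaulayDown c (n + 1) - 1) n +
      macaulayDown (macaulayDown c (n + 1) + 1) (n + 1) ≤ macaulayDown c (n + 1) := by
  induction n generalizing c with
  | zero =>
    have h0 : ∀ x, macaulayDown x 0 = 0 := fun x => by rw [macaulayDown]
    rw [h0]
    have := mdAux_lt 0 (macaulayDown c (0 + 1) + 1) (by omega)
    omega
  | succ n ih =>
    obtain ⟨k, hk, h1, h2⟩ := mdAux_exists (n + 1) c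
    have hk2 : n + 2 ≤ k := by
      by_contra hlt
      have : k = n + 1 := by omega
      subst this
      simp at h2
      omega
    obtain ⟨j, rfl⟩ : ∃ j, k = j + 1 := ⟨k - 1, by omega⟩
    have hF := mdAux_eq (n + 1) c (j + 1) h1 h2
    obtain ⟨r, rfl⟩ := Nat.exists_eq_add_of_le h1
    simp only [Nat.add_sub_cancel, Nat.add_sub_cancel_left] at hF
    have p1 := Nat.choose_succ_succ (j + 1) (n + 1)
    have p2 := Nat.choose_succ_succ j (n + 1)
    have p3 := Nat.choose_succ_succ j n
    simp only [Nat.succ_eq_add_one] at p1 p2 p3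
    have hr : r + 1 ≤ Nat.choose (j + 1) (n + 1) := by omega
    have hpos : 0 < Nat.choose j (n + 1) := Nat.choose_pos (by omega)
    have hpos2 : 0 < Nat.choose j n := Nat.choose_pos (by omega)
    have hfr : macaulayDown r (n + 1) + 1 ≤ Nat.choose j (n + 1) := by
      have q := (mdAux_mono (n + 1) r (Nat.choose (j + 1) (n + 1) - 1) (by omega)).1
      rw [mdAux_choose_pred] at q
      simp only [Nat.add_sub_cancel] at q
      omega
    have hgr : r ≤ macaulayDown r (n + 1) + Nat.choose j n := by
      have q := (mdAux_mono (n + 1) r (Nat.choose (j + 1) (n + 1)) (by omega)).2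
      rw [mdAux_choose n (j + 1) (by omega)] at q
      simp only [Nat.add_sub_cancel] at q
      omega
    have hfle : macaulayDown r (n + 1) ≤ r := by
      have q := (mdAux_mono (n + 1) 0 r (by omega)).2
      rw [mdAux_zero] at q
      omega
    rw [hF]
    set F := macaulayDown r (n + 1) with hFdef
    have hx : Nat.choose (j + 1) (n + 1 + 1) + r - (Nat.choose j (n + 1 + 1) + F) - 1
        = Nat.choose j (n + 1) + (r - F) - 1 := by omega
    rw [hx]
    by_cases hB : F + 1 = Nat.choose j (n + 1)
    · rw [show Nat.choose j (n + 1 + 1) + F + 1 = Nat.choose (j + 1) (n + 1 + 1) by omega,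
        mdAux_choose (n + 1) (j + 1) (by omega)]
      have q := (mdAux_mono (n + 1) (Nat.choose j (n + 1) + (r - F) - 1)
        (Nat.choose (j + 1) (n + 1) - 1) (by omega)).1
      rw [mdAux_choose_pred] at q
      simp only [Nat.add_sub_cancel] at q ⊢
      omega
    · rw [mdAux_eq (n + 1) (Nat.choose j (n + 1 + 1) + F + 1) j (by omega) (by omega)]
      rw [show Nat.choose j (n + 1 + 1) + F + 1 - Nat.choose j (n + 1 + 1) = F + 1 by omega]
      obtain ⟨i, rfl⟩ : ∃ i, j = i + 1 := ⟨j - 1, by omega⟩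
      have p4 := Nat.choose_succ_succ i (n + 1)
      simp only [Nat.succ_eq_add_one] at p4
      simp only [Nat.add_sub_cancel]
      rcases Nat.eq_zero_or_pos r with hr0 | hr0
      · have hF0 : F = 0 := by omega
        rw [hF0, hr0]
        simp only [Nat.zero_add, Nat.sub_zero, Nat.add_zero]
        rw [mdAux_one, mdAux_choose_pred]
        simp only [Nat.add_sub_cancel]
        omega
      · have hlt := mdAux_lt n r hr0
        have q := ih r hr0
        rw [← hFdef] at q hlt
        rw [mdAux_eq n (Nat.choose (i + 1) (n + 1) + (r - F) - 1) (i + 1) (by omega) (by omega)]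
        rw [show Nat.choose (i + 1) (n + 1) + (r - F) - 1 - Nat.choose (i + 1) (n + 1)
          = r - F - 1 by omega]
        simp only [Nat.add_sub_cancel]
        have := Nat.choose_succ_succ i (n + 1)
        simp only [Nat.succ_eq_add_one] at this
        omega

/-- The numerical lemma in Green's argument: for `d̄ ≥ 2` and `c ≥ c_H ≥ 0`, if
`c_H ≤ (c_H)_⟨d̄⟩ + (c - c_H)_⟨d̄-1⟩` then `c_H ≤ c_⟨d̄⟩`. -/
theorem macaulay_numerical_lemma
    (dbar c cH : ℕ) (hdbar : 2 ≤ dbar) (hcH : cH ≤ c)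
    (h : cH ≤ macaulayDown cH dbar + macaulayDown (c - cH) (dbar - 1)) :
    cH ≤ macaulayDown c dbar := by
  obtain ⟨n, rfl⟩ : ∃ n, dbar = n + 1 := ⟨dbar - 1, by omega⟩
  simp only [Nat.add_sub_cancel] at h
  by_contra hlt
  have q := mdAux_main n c (by omega)
  have q1 := (mdAux_mono (n + 1) (macaulayDown c (n + 1) + 1) cH (by omega)).2
  have q2 := (mdAux_mono n (c - cH) (c - macaulayDown c (n + 1) - 1) (by omega)).1
  omega
end
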